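/- arXiv:1403.0446 — 5 statements merged into one kernel-verified Lean document; each statement's English description precedes it below -/
import Mathlib

section
/- Let z₁, z₂, z₃ be nonzero complex numbers and n₁, n₂, n₃ ≥ 1 integers. For j = 1, 2, 3 set A_j = ℂ[t^{±1}]/((t − z_j)^{n_j}). Then the quotient vector space (A₁ ⊗_ℂ A₂ ⊗_ℂ A₃)/H is nonzero if and only if z₁z₂z₃ = 1. -/
open LaurentPolynomial TensorProduct

set_option synthInstance.maxHeartbeats 1000000
set_option maxHeartbeats 1000000
noncomputable section

abbrev LQuot (K : Type) [Field K] (p : LaurentPolynomial K) : Type :=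
  LaurentPolynomial K ⧸ Ideal.span {p}

abbrev Trip (K : Type) [Field K] (p q r : LaurentPolynomial K) : Type :=
  (LQuot K p ⊗[K] LQuot K q) ⊗[K] LQuot K r

def holSub (K : Type) [Field K] (p q r : LaurentPolynomial K) :
    Submodule K (Trip K p q r) :=
  Submodule.span K { x | ∃ (a : LQuot K p) (b : LQuot K q) (c : LQuot K r),
    x = (a ⊗ₜ[K] b) ⊗ₜ[K] c -
      (((T 1 : LaurentPolynomial K) • a) ⊗ₜ[K] ((T 1 : LaurentPolynomial K) • b)) ⊗ₜ[K]
        ((T 1 : LaurentPolynomial K) • c) }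

instance (K : Type) [Field K] (p q r : LaurentPolynomial K) : AddCommGroup (Trip K p q r) :=
  TensorProduct.addCommGroup

/-!
The subspace `H` is the ideal generated by `1 - u`, where `u = t ⊗ t ⊗ t`, so the quotient is
nonzero exactly when `1 - u` is not a unit. As `t - z_j` is nilpotent in `A_j`, the element
`u - z₁z₂z₃` is nilpotent. Hence `1 - u` differs from the scalar `1 - z₁z₂z₃` by a nilpotent, and
in a nonzero algebra over a field it is a unit if and only if that scalar is nonzero.
-/

section Span

variable {R : Type*} [CommSemiring R]

theorem span_image_mul_left_eq_restrictScalars {A : Type*} [CommSemiring A] [Algebra R A]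
    {s : Set A} (hs : Submodule.span R s = ⊤) (u : A) :
    Submodule.span R ((u * ·) '' s) = (Ideal.span {u}).restrictScalars R := by
  have span_eq_range : Submodule.span R ((u * ·) '' s) = (LinearMap.mulLeft R u).range := by
    rw [LinearMap.range_eq_map, ← hs, Submodule.map_span]
    rfl
  ext x
  simp only [span_eq_range, LinearMap.mem_range, LinearMap.mulLeft_apply,
    Submodule.restrictScalars_mem, Ideal.mem_span_singleton, dvd_def, eq_comm]

theorem span_tmul_tmul_eq_top (M N P : Type*) [AddCommMonoid M] [AddCommMonoid N]
    [AddCommMonoid P] [Module R M] [Module R N] [Module R P] :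
    Submodule.span R {x : (M ⊗[R] N) ⊗[R] P | ∃ m n p, (m ⊗ₜ[R] n) ⊗ₜ[R] p = x} = ⊤ := by
  have image2_eq : {x : (M ⊗[R] N) ⊗[R] P | ∃ m n p, (m ⊗ₜ[R] n) ⊗ₜ[R] p = x} =
      Set.image2 (fun y p => TensorProduct.mk R (M ⊗[R] N) P y p)
        {y | ∃ m n, m ⊗ₜ[R] n = y} Set.univ := by
    ext x
    simp [Set.mem_image2]
  rw [image2_eq, ← Submodule.map₂_span_span, TensorProduct.span_tmul_eq_top, Submodule.span_univ,
    TensorProduct.map₂_mk_top_top_eq_top]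

end Span

theorem nontrivial_tensorProduct_iff {K M N : Type*} [Field K] [AddCommGroup M] [Module K M]
    [AddCommGroup N] [Module K N] : Nontrivial (M ⊗[K] N) ↔ Nontrivial M ∧ Nontrivial N := by
  constructor
  · intro _
    have : Nontrivial M := not_subsingleton_iff_nontrivial.mp fun _ =>
      not_subsingleton (M ⊗[K] N) inferInstance
    exact ⟨this, (Module.FaithfullyFlat.nontrivial_tensorProduct_iff_right K M).mp ‹_›⟩
  · rintro ⟨_, _⟩
    infer_instance

theorem isNilpotent_tmul_sub_algebraMap {R A B : Type*} [CommRing R] [Ring A] [Algebra R A]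
    [Ring B] [Algebra R B] {a : A} {b : B} {z w : R} (ha : IsNilpotent (a - algebraMap R A z))
    (hb : IsNilpotent (b - algebraMap R B w)) :
    IsNilpotent (a ⊗ₜ[R] b - algebraMap R (A ⊗[R] B) (z * w)) := by
  have decomposition : a ⊗ₜ[R] b - algebraMap R (A ⊗[R] B) (z * w) =
      (a - algebraMap R A z) ⊗ₜ[R] b + algebraMap R A z ⊗ₜ[R] (b - algebraMap R B w) := by
    rw [TensorProduct.sub_tmul, TensorProduct.tmul_sub, sub_add_sub_cancel, map_mul,
      Algebra.TensorProduct.algebraMap_apply, Algebra.TensorProduct.algebraMap_apply',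
      Algebra.TensorProduct.tmul_mul_tmul, mul_one, one_mul]
  have left_nilpotent : IsNilpotent ((a - algebraMap R A z) ⊗ₜ[R] b) := by
    obtain ⟨n, hn⟩ := ha
    exact ⟨n, by rw [Algebra.TensorProduct.tmul_pow, hn, TensorProduct.zero_tmul]⟩
  have right_nilpotent : IsNilpotent (algebraMap R A z ⊗ₜ[R] (b - algebraMap R B w)) := by
    obtain ⟨n, hn⟩ := hb
    exact ⟨n, by rw [Algebra.TensorProduct.tmul_pow, hn, TensorProduct.tmul_zero]⟩
  have commute : Commute ((a - algebraMap R A z) ⊗ₜ[R] b)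
      (algebraMap R A z ⊗ₜ[R] (b - algebraMap R B w)) := by
    have hleft : Commute (a - algebraMap R A z) (algebraMap R A z) :=
      (Algebra.commutes z _).symm
    have hright : Commute b (b - algebraMap R B w) :=
      (Commute.refl b).sub_right (Algebra.commutes w b).symm
    rw [commute_iff_eq, Algebra.TensorProduct.tmul_mul_tmul, Algebra.TensorProduct.tmul_mul_tmul,
      hleft.eq, hright.eq]
  rw [decomposition]
  exact commute.isNilpotent_add left_nilpotent right_nilpotent

theorem not_isUnit_one_sub_iff_of_isNilpotent_sub {K A : Type*} [Field K] [Ring A] [Algebra K A]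
    {u : A} {z : K} (hu : IsNilpotent (u - algebraMap K A z)) :
    ¬ IsUnit (1 - u) ↔ Nontrivial A ∧ z = 1 := by
  constructor
  · intro not_unit
    refine ⟨not_subsingleton_iff_nontrivial.mp fun _ => not_unit (isUnit_of_subsingleton _), ?_⟩
    by_contra hz
    have scalar_isUnit : IsUnit (algebraMap K A (1 - z)) :=
      (IsUnit.mk0 _ (sub_ne_zero.mpr (Ne.symm hz))).map _
    have sub_eq : 1 - u = algebraMap K A (1 - z) + -(u - algebraMap K A z) := by
      rw [map_sub, map_one]
      abel
    rw [sub_eq] at not_unit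
    exact not_unit <| hu.neg.isUnit_add_left_of_commute scalar_isUnit (Algebra.commutes _ _).symm
  · rintro ⟨_, rfl⟩
    rw [map_one] at hu
    exact neg_sub u 1 ▸ hu.neg.not_isUnit

section Holonomy

variable {R A B D : Type*} [CommRing R] [CommRing A] [Algebra R A] [CommRing B] [Algebra R B]
  [CommRing D] [Algebra R D]

variable (R) in
/-- The holonomy subspace of a triple tensor product of algebras on which `t` acts by
multiplication by `a`, `b` and `c` respectively. Unlike `holSub`, it uses the module structures
underlying the algebras, so the ring structure of the tensor product is available. -/
def mulHolonomy (a : A) (b : B) (c : D) : Submodule R ((A ⊗[R] B) ⊗[R] D) :=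
  Submodule.span R {x | ∃ α β γ,
    x = (α ⊗ₜ[R] β) ⊗ₜ[R] γ - ((a * α) ⊗ₜ[R] (b * β)) ⊗ₜ[R] (c * γ)}

theorem mulHolonomy_eq_ideal_span (a : A) (b : B) (c : D) :
    mulHolonomy R a b c = (Ideal.span {1 - (a ⊗ₜ[R] b) ⊗ₜ[R] c}).restrictScalars R := by
  rw [← span_image_mul_left_eq_restrictScalars (span_tmul_tmul_eq_top A B D), mulHolonomy]
  congr 1
  have one_sub_mul_tmul (α : A) (β : B) (γ : D) :
      (1 - (a ⊗ₜ[R] b) ⊗ₜ[R] c) * ((α ⊗ₜ[R] β) ⊗ₜ[R] γ) =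
        (α ⊗ₜ[R] β) ⊗ₜ[R] γ - ((a * α) ⊗ₜ[R] (b * β)) ⊗ₜ[R] (c * γ) := by
    rw [sub_mul, one_mul, Algebra.TensorProduct.tmul_mul_tmul,
      Algebra.TensorProduct.tmul_mul_tmul]
  ext x
  constructor
  · rintro ⟨α, β, γ, rfl⟩
    exact ⟨_, ⟨α, β, γ, rfl⟩, one_sub_mul_tmul α β γ⟩
  · rintro ⟨_, ⟨α, β, γ, rfl⟩, rfl⟩
    exact ⟨α, β, γ, one_sub_mul_tmul α β γ⟩

theorem nontrivial_quotient_mulHolonomy_iff_not_isUnit (a : A) (b : B) (c : D) :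
    Nontrivial (((A ⊗[R] B) ⊗[R] D) ⧸ mulHolonomy R a b c) ↔
      ¬ IsUnit (1 - (a ⊗ₜ[R] b) ⊗ₜ[R] c) := by
  rw [Submodule.Quotient.nontrivial_iff, mulHolonomy_eq_ideal_span, Ne,
    Submodule.restrictScalars_eq_top_iff, Ideal.span_singleton_eq_top]

theorem nontrivial_quotient_mulHolonomy_iff {K A B D : Type*} [Field K] [CommRing A] [Algebra K A]
    [CommRing B] [Algebra K B] [CommRing D] [Algebra K D] {a : A} {b : B} {c : D} {z₁ z₂ z₃ : K}
    (ha : IsNilpotent (a - algebraMap K A z₁)) (hb : IsNilpotent (b - algebraMap K B z₂))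
    (hc : IsNilpotent (c - algebraMap K D z₃)) :
    Nontrivial (((A ⊗[K] B) ⊗[K] D) ⧸ mulHolonomy K a b c) ↔
      ((Nontrivial A ∧ Nontrivial B) ∧ Nontrivial D) ∧ z₁ * z₂ * z₃ = 1 := by
  have tmul_nilpotent : IsNilpotent ((a ⊗ₜ[K] b) ⊗ₜ[K] c - algebraMap K _ (z₁ * z₂ * z₃)) :=
    isNilpotent_tmul_sub_algebraMap (isNilpotent_tmul_sub_algebraMap ha hb) hc
  rw [nontrivial_quotient_mulHolonomy_iff_not_isUnit,
    not_isUnit_one_sub_iff_of_isNilpotent_sub tmul_nilpotent, nontrivial_tensorProduct_iff,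
    nontrivial_tensorProduct_iff]

end Holonomy

section LQuot

variable {K : Type} [Field K]

theorem nontrivial_LQuot_of_eval₂_eq_zero {p : LaurentPolynomial K} (z : Kˣ)
    (hp : eval₂ (RingHom.id K) z p = 0) : Nontrivial (LQuot K p) := by
  rw [Ideal.Quotient.nontrivial_iff, Ne, Ideal.span_singleton_eq_top]
  intro p_isUnit
  exact not_isUnit_zero (hp ▸ p_isUnit.map (eval₂ (RingHom.id K) z))

theorem nontrivial_LQuot_sub_C_pow {z : K} (hz : z ≠ 0) {n : ℕ} (hn : n ≠ 0) :
    Nontrivial (LQuot K ((T 1 - C z) ^ n)) :=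
  nontrivial_LQuot_of_eval₂_eq_zero (Units.mk0 z hz) (by simp [hn])

theorem isNilpotent_mk_T_sub_algebraMap (z : K) (n : ℕ) :
    IsNilpotent ((Ideal.Quotient.mk _ (T 1) : LQuot K ((T 1 - C z) ^ n)) -
      algebraMap K (LQuot K ((T 1 - C z) ^ n)) z) :=
  ⟨n, Ideal.Quotient.eq_zero_iff_mem.mpr (Ideal.mem_span_singleton_self _)⟩

theorem holSub_eq_mulHolonomy (p q r : LaurentPolynomial K) :
    holSub K p q r = mulHolonomy K (Ideal.Quotient.mk (Ideal.span {p}) (T 1))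
      (Ideal.Quotient.mk (Ideal.span {q}) (T 1)) (Ideal.Quotient.mk (Ideal.span {r}) (T 1)) :=
  rfl

theorem stmt0_general (z₁ z₂ z₃ : K) {n₁ n₂ n₃ : ℕ} (hn₁ : n₁ ≠ 0) (hn₂ : n₂ ≠ 0)
    (hn₃ : n₃ ≠ 0) :
    Nontrivial (Trip K ((T 1 - C z₁) ^ n₁) ((T 1 - C z₂) ^ n₂) ((T 1 - C z₃) ^ n₃) ⧸
        holSub K ((T 1 - C z₁) ^ n₁) ((T 1 - C z₂) ^ n₂) ((T 1 - C z₃) ^ n₃)) ↔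
      z₁ * z₂ * z₃ = 1 := by
  rw [holSub_eq_mulHolonomy]
  refine (nontrivial_quotient_mulHolonomy_iff (isNilpotent_mk_T_sub_algebraMap z₁ n₁)
    (isNilpotent_mk_T_sub_algebraMap z₂ n₂) (isNilpotent_mk_T_sub_algebraMap z₃ n₃)).trans
    (and_iff_right_of_imp fun prod_eq_one => ?_)
  obtain ⟨⟨hz₁, hz₂⟩, hz₃⟩ : (z₁ ≠ 0 ∧ z₂ ≠ 0) ∧ z₃ ≠ 0 := by
    simpa only [mul_ne_zero_iff] using ne_of_eq_of_ne prod_eq_one one_ne_zero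
  exact ⟨⟨nontrivial_LQuot_sub_C_pow hz₁ hn₁, nontrivial_LQuot_sub_C_pow hz₂ hn₂⟩,
    nontrivial_LQuot_sub_C_pow hz₃ hn₃⟩

end LQuot

theorem stmt0 (z₁ z₂ z₃ : ℂ) (hz₁ : z₁ ≠ 0) (hz₂ : z₂ ≠ 0) (hz₃ : z₃ ≠ 0)
    (n₁ n₂ n₃ : ℕ) (hn₁ : 1 ≤ n₁) (hn₂ : 1 ≤ n₂) (hn₃ : 1 ≤ n₃) :
    Nontrivial (Trip ℂ ((T 1 - C z₁) ^ n₁) ((T 1 - C z₂) ^ n₂) ((T 1 - C z₃) ^ n₃) ⧸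
        holSub ℂ ((T 1 - C z₁) ^ n₁) ((T 1 - C z₂) ^ n₂) ((T 1 - C z₃) ^ n₃)) ↔
      z₁ * z₂ * z₃ = 1 := by
  exact stmt0_general z₁ z₂ z₃ (Nat.one_le_iff_ne_zero.mp hn₁) (Nat.one_le_iff_ne_zero.mp hn₂)
    (Nat.one_le_iff_ne_zero.mp hn₃)
end
end

section
/- Let 𝔄 be a finitely generated module over ℚ[t^{±1}] and let δ ∈ ℚ[t] with δ ≠ 0 and δ(0) ≠ 0 be such that the annihilator of 𝔄 in ℚ[t^{±1}] is the ideal generated by δ. Then 𝔄_h is nonzero if and only if there exist complex roots z₁, z₂, z₃ of δ (not necessarily distinct) such that z₁z₂z₃ = 1. -/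
open LaurentPolynomial TensorProduct

set_option synthInstance.maxHeartbeats 1000000
set_option maxHeartbeats 1000000
noncomputable section

/-- The holonomy subspace of `M ⊗ M ⊗ M`: the `K`-span of the elements
`β₁ ⊗ β₂ ⊗ β₃ - tβ₁ ⊗ tβ₂ ⊗ tβ₃`, for a module `M` over the Laurent polynomial
ring `K[t,t⁻¹]`. -/
def holSubM (K : Type) [Field K] (M : Type) [AddCommGroup M]
    [Module (LaurentPolynomial K) M] [Module K M]
    [IsScalarTower K (LaurentPolynomial K) M] :
    Submodule K ((M ⊗[K] M) ⊗[K] M) :=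
  Submodule.span K { x | ∃ a b c : M,
    x = (a ⊗ₜ[K] b) ⊗ₜ[K] c -
      (((T 1 : LaurentPolynomial K) • a) ⊗ₜ[K] ((T 1 : LaurentPolynomial K) • b)) ⊗ₜ[K]
        ((T 1 : LaurentPolynomial K) • c) }

/-!
Writing `R = K[t, t⁻¹]`, the holonomy subspace is the image of `1 - t ⊗ t ⊗ t ∈ R ⊗ R ⊗ R` acting
on `M ⊗ M ⊗ M`. If this image is proper, the ideal of `R ⊗ R ⊗ R` generated by `1 - t ⊗ t ⊗ t` and
the elements acting as zero is proper, so by the Nullstellensatz it vanishes at a point with values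
in the algebraically closed field `L`; the coordinates of that point are three roots of `δ` with
product `1`. Conversely, a root `z` of `δ` defines an evaluation `R → L` whose kernel contains the
annihilator of `M`, hence lies in the support of `M`, and so yields a nonzero functional `M → L` on
which `t` acts as `z`. The product of three such functionals is a nonzero functional on
`M ⊗ M ⊗ M` that vanishes on the holonomy subspace as soon as `z₁ z₂ z₃ = 1`.
-/

section Nullstellensatz

variable {K R L : Type*} [Field K] [CommRing R] [Algebra K R] [Algebra.FiniteType K R] [Field L]
  [Algebra K L] [IsAlgClosed L]

lemma exists_algHom_le_ker_of_ne_top {I : Ideal R} (hI : I ≠ ⊤) :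
    ∃ φ : R →ₐ[K] L, I ≤ RingHom.ker φ := by
  obtain ⟨m, hm, hIm⟩ := I.exists_le_maximal hI
  let _ : Field (R ⧸ m) := Ideal.Quotient.field m
  have : Module.Finite K (R ⧸ m) := finite_of_finite_type_of_isJacobsonRing K (R ⧸ m)
  let ψ : R ⧸ m →ₐ[K] L := IsAlgClosed.lift
  refine ⟨ψ.comp (Ideal.Quotient.mkₐ K m), fun r hr ↦ ?_⟩
  have hr0 : Ideal.Quotient.mkₐ K m r = 0 := Ideal.Quotient.eq_zero_iff_mem.2 (hIm hr)
  rw [RingHom.mem_ker, AlgHom.comp_apply, hr0, map_zero]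

lemma exists_algHom_ker_le_ker_of_not_isUnit {E : Type*} [Semiring E] [Algebra K E]
    (θ : R →ₐ[K] E) {u : R} (hu : ¬ IsUnit (θ u)) :
    ∃ φ : R →ₐ[K] L, RingHom.ker θ ≤ RingHom.ker φ ∧ φ u = 0 := by
  have hI : RingHom.ker θ ⊔ Ideal.span {u} ≠ ⊤ := by
    intro htop
    obtain ⟨k, hk, _, hr, hkr⟩ := Submodule.mem_sup.1 ((Ideal.eq_top_iff_one _).1 htop)
    obtain ⟨v, rfl⟩ := Ideal.mem_span_singleton'.1 hr
    have hvu : θ v * θ u = 1 := by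
      simpa [RingHom.mem_ker.1 hk] using congrArg θ hkr
    have huv : θ u * θ v = 1 := by rw [← map_mul, mul_comm, map_mul, hvu]
    exact hu ⟨⟨θ u, θ v, huv, hvu⟩, rfl⟩
  obtain ⟨φ, hφ⟩ := exists_algHom_le_ker_of_ne_top (K := K) (L := L) hI
  exact ⟨φ, le_sup_left.trans hφ, (Ideal.span_singleton_le_iff_mem _).1 (le_sup_right.trans hφ)⟩

end Nullstellensatz

lemma exists_linearMap_ne_zero_of_annihilator_le_ker {K R L M : Type*} [CommRing K]
    [CommRing R] [Algebra K R] [Field L] [Algebra K L] [AddCommGroup M] [Module R M] [Module K M]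
    [IsScalarTower K R M] [Module.Finite R M] (φ : R →ₐ[K] L)
    (hφ : Module.annihilator R M ≤ RingHom.ker φ) :
    ∃ f : M →ₗ[K] L, f ≠ 0 ∧ ∀ (r : R) (a : M), f (r • a) = φ r * f a := by
  have : (RingHom.ker φ).IsPrime := RingHom.ker_isPrime φ
  let κ := (RingHom.ker φ).ResidueField
  have : Nontrivial (κ ⊗[R] M) :=
    (Module.mem_support_iff_nontrivial_residueField_tensorProduct ⟨RingHom.ker φ, this⟩).1
      (Module.mem_support_iff_of_finite.2 hφ)
  obtain ⟨g, hg⟩ : ∃ g : Module.Dual κ (κ ⊗[R] M), g ≠ 0 := exists_ne 0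
  let ι : κ →ₐ[K] L := Ideal.ResidueField.liftₐ _ φ le_rfl fun r hr ↦ IsUnit.mk0 (φ r) hr
  have hι (r : R) : ι (algebraMap R κ r) = φ r := Ideal.ResidueField.liftₐ_algebraMap ..
  let f : M →ₗ[K] L :=
    ι.toLinearMap ∘ₗ g.restrictScalars K ∘ₗ (TensorProduct.mk R κ M 1).restrictScalars K
  have hf (a : M) : f a = ι (g (1 ⊗ₜ a)) := rfl
  refine ⟨f, fun hf0 ↦ hg ?_, fun r a ↦ ?_⟩
  · ext a
    exact ι.injective ((LinearMap.congr_fun hf0 a).trans (map_zero ι).symm)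
  · rw [hf, hf, ← hι, ← map_mul, ← smul_eq_mul, ← map_smul, tmul_smul, algebraMap_smul]

section TripleSMul

variable (K R M : Type*) [CommRing K] [CommRing R] [Algebra K R] [AddCommGroup M] [Module R M]
  [Module K M] [IsScalarTower K R M]

/-- The action of `R ⊗ R ⊗ R` on `M ⊗ M ⊗ M`, factor by factor. It is a homomorphism to the
endomorphism algebra rather than a `Module` instance, so that its kernel can be used as an ideal. -/
def tripleSMul : (R ⊗[K] R) ⊗[K] R →ₐ[K] Module.End K ((M ⊗[K] M) ⊗[K] M) :=
  Module.endTensorEndAlgHom.comp <| Algebra.TensorProduct.map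
    (Module.endTensorEndAlgHom.comp <|
      Algebra.TensorProduct.map (Algebra.lsmul K K M) (Algebra.lsmul K K M))
    (Algebra.lsmul K K M)

variable {K R M}

lemma tripleSMul_tmul_apply (r s t : R) (a b c : M) :
    tripleSMul K R M ((r ⊗ₜ s) ⊗ₜ t) ((a ⊗ₜ b) ⊗ₜ c) = ((r • a) ⊗ₜ (s • b)) ⊗ₜ (t • c) :=
  rfl

lemma tripleSMul_tmul_eq_zero {r s t : R}
    (h : r ∈ Module.annihilator R M ∨ s ∈ Module.annihilator R M ∨ t ∈ Module.annihilator R M) :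
    tripleSMul K R M ((r ⊗ₜ s) ⊗ₜ t) = 0 := by
  refine TensorProduct.ext_threefold fun a b c ↦ ?_
  simp only [Module.mem_annihilator] at h
  rw [tripleSMul_tmul_apply, LinearMap.zero_apply]
  rcases h with h | h | h <;> simp [h]

variable {L : Type*} [CommRing L] [Algebra K L]

/-- The point `(φ₁, φ₂, φ₃)` of `R ⊗ R ⊗ R`, i.e. the homomorphism
`r ⊗ s ⊗ t ↦ φ₁ r * φ₂ s * φ₃ t`. -/
def triplePoint (φ₁ φ₂ φ₃ : R →ₐ[K] L) : (R ⊗[K] R) ⊗[K] R →ₐ[K] L :=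
  Algebra.TensorProduct.productMap (Algebra.TensorProduct.productMap φ₁ φ₂) φ₃

lemma triplePoint_tmul (φ₁ φ₂ φ₃ : R →ₐ[K] L) (r s t : R) :
    triplePoint φ₁ φ₂ φ₃ ((r ⊗ₜ s) ⊗ₜ t) = φ₁ r * φ₂ s * φ₃ t := by
  simp only [triplePoint, Algebra.TensorProduct.productMap_apply_tmul]

lemma exists_eq_triplePoint (ψ : (R ⊗[K] R) ⊗[K] R →ₐ[K] L) :
    ∃ φ₁ φ₂ φ₃ : R →ₐ[K] L, ψ = triplePoint φ₁ φ₂ φ₃ := by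
  refine ⟨(ψ.comp Algebra.TensorProduct.includeLeft).comp Algebra.TensorProduct.includeLeft,
    (ψ.comp Algebra.TensorProduct.includeLeft).comp Algebra.TensorProduct.includeRight,
    ψ.comp Algebra.TensorProduct.includeRight, ?_⟩
  ext r <;> simp [triplePoint, ← Algebra.TensorProduct.one_def]

lemma annihilator_le_ker_of_ker_tripleSMul_le_ker {φ₁ φ₂ φ₃ : R →ₐ[K] L}
    (h : RingHom.ker (tripleSMul K R M) ≤ RingHom.ker (triplePoint φ₁ φ₂ φ₃)) :
    Module.annihilator R M ≤ RingHom.ker φ₁ ∧ Module.annihilator R M ≤ RingHom.ker φ₂ ∧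
      Module.annihilator R M ≤ RingHom.ker φ₃ := by
  refine ⟨fun r hr ↦ ?_, fun r hr ↦ ?_, fun r hr ↦ ?_⟩
  · simpa [triplePoint_tmul] using h (x := (r ⊗ₜ 1) ⊗ₜ 1) (tripleSMul_tmul_eq_zero (.inl hr))
  · simpa [triplePoint_tmul] using
      h (x := (1 ⊗ₜ r) ⊗ₜ 1) (tripleSMul_tmul_eq_zero (.inr (.inl hr)))
  · simpa [triplePoint_tmul] using
      h (x := (1 ⊗ₜ 1) ⊗ₜ r) (tripleSMul_tmul_eq_zero (.inr (.inr hr)))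

/-- The functional `a ⊗ b ⊗ c ↦ f₁ a * f₂ b * f₃ c` on `M ⊗ M ⊗ M`. -/
def tripleFunctional (f₁ f₂ f₃ : M →ₗ[K] L) : (M ⊗[K] M) ⊗[K] M →ₗ[K] L :=
  LinearMap.mul' K L ∘ₗ TensorProduct.map (LinearMap.mul' K L ∘ₗ TensorProduct.map f₁ f₂) f₃

lemma tripleFunctional_tmul (f₁ f₂ f₃ : M →ₗ[K] L) (a b c : M) :
    tripleFunctional f₁ f₂ f₃ ((a ⊗ₜ b) ⊗ₜ c) = f₁ a * f₂ b * f₃ c :=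
  rfl

lemma tripleFunctional_tripleSMul {φ₁ φ₂ φ₃ : R →ₐ[K] L} {f₁ f₂ f₃ : M →ₗ[K] L}
    (h₁ : ∀ (r : R) (a : M), f₁ (r • a) = φ₁ r * f₁ a)
    (h₂ : ∀ (r : R) (a : M), f₂ (r • a) = φ₂ r * f₂ a)
    (h₃ : ∀ (r : R) (a : M), f₃ (r • a) = φ₃ r * f₃ a)
    (s : (R ⊗[K] R) ⊗[K] R) (x : (M ⊗[K] M) ⊗[K] M) :
    tripleFunctional f₁ f₂ f₃ (tripleSMul K R M s x) =
      triplePoint φ₁ φ₂ φ₃ s * tripleFunctional f₁ f₂ f₃ x := by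
  let F := tripleFunctional f₁ f₂ f₃
  suffices h : (LinearMap.llcomp K _ _ _ F) ∘ₗ (tripleSMul K R M).toLinearMap =
      (LinearMap.mul K L).compl₁₂ (triplePoint φ₁ φ₂ φ₃).toLinearMap F from
    LinearMap.congr_fun₂ h s x
  refine TensorProduct.ext_threefold fun r₁ r₂ r₃ ↦ TensorProduct.ext_threefold fun a b c ↦ ?_
  change F (tripleSMul K R M ((r₁ ⊗ₜ r₂) ⊗ₜ r₃) ((a ⊗ₜ b) ⊗ₜ c)) =
    triplePoint φ₁ φ₂ φ₃ ((r₁ ⊗ₜ r₂) ⊗ₜ r₃) * F ((a ⊗ₜ b) ⊗ₜ c)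
  simp only [F, tripleSMul_tmul_apply, tripleFunctional_tmul, triplePoint_tmul, h₁, h₂, h₃]
  ring

end TripleSMul

lemma exists_triplePoint_eq_zero_of_range_ne_top {K R M L : Type*} [Field K] [CommRing R]
    [Algebra K R] [Algebra.FiniteType K R] [AddCommGroup M] [Module R M] [Module K M]
    [IsScalarTower K R M] [Field L] [Algebra K L] [IsAlgClosed L]
    {u : (R ⊗[K] R) ⊗[K] R} (hu : LinearMap.range (tripleSMul K R M u) ≠ ⊤) :
    ∃ φ₁ φ₂ φ₃ : R →ₐ[K] L, Module.annihilator R M ≤ RingHom.ker φ₁ ∧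
      Module.annihilator R M ≤ RingHom.ker φ₂ ∧ Module.annihilator R M ≤ RingHom.ker φ₃ ∧
      triplePoint φ₁ φ₂ φ₃ u = 0 := by
  have : Algebra.FiniteType K (R ⊗[K] R) := .trans (S := R) inferInstance inferInstance
  have : Algebra.FiniteType K ((R ⊗[K] R) ⊗[K] R) := .trans (S := R ⊗[K] R) this inferInstance
  have hunit : ¬ IsUnit (tripleSMul K R M u) := fun h ↦
    hu (LinearMap.range_eq_top.2 ((Module.End.isUnit_iff _).1 h).2)
  obtain ⟨ψ, hker, hψu⟩ :=
    exists_algHom_ker_le_ker_of_not_isUnit (L := L) (tripleSMul K R M) hunit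
  obtain ⟨φ₁, φ₂, φ₃, rfl⟩ := exists_eq_triplePoint ψ
  obtain ⟨h₁, h₂, h₃⟩ := annihilator_le_ker_of_ker_tripleSMul_le_ker hker
  exact ⟨φ₁, φ₂, φ₃, h₁, h₂, h₃, hψu⟩

lemma range_tripleSMul_ne_top_of_triplePoint_eq_zero {K R M L : Type*} [CommRing K]
    [CommRing R] [Algebra K R] [AddCommGroup M] [Module R M] [Module K M] [IsScalarTower K R M]
    [Module.Finite R M] [Field L] [Algebra K L] {φ₁ φ₂ φ₃ : R →ₐ[K] L}
    (h₁ : Module.annihilator R M ≤ RingHom.ker φ₁) (h₂ : Module.annihilator R M ≤ RingHom.ker φ₂)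
    (h₃ : Module.annihilator R M ≤ RingHom.ker φ₃) {u : (R ⊗[K] R) ⊗[K] R}
    (hu : triplePoint φ₁ φ₂ φ₃ u = 0) : LinearMap.range (tripleSMul K R M u) ≠ ⊤ := by
  obtain ⟨f₁, hf₁, hφ₁⟩ := exists_linearMap_ne_zero_of_annihilator_le_ker φ₁ h₁
  obtain ⟨f₂, hf₂, hφ₂⟩ := exists_linearMap_ne_zero_of_annihilator_le_ker φ₂ h₂
  obtain ⟨f₃, hf₃, hφ₃⟩ := exists_linearMap_ne_zero_of_annihilator_le_ker φ₃ h₃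
  obtain ⟨a, ha⟩ := DFunLike.ne_iff.1 hf₁
  obtain ⟨b, hb⟩ := DFunLike.ne_iff.1 hf₂
  obtain ⟨c, hc⟩ := DFunLike.ne_iff.1 hf₃
  intro htop
  obtain ⟨x, hx⟩ := LinearMap.range_eq_top.1 htop ((a ⊗ₜ b) ⊗ₜ c)
  have hzero : tripleFunctional f₁ f₂ f₃ ((a ⊗ₜ b) ⊗ₜ c) = 0 := by
    rw [← hx, tripleFunctional_tripleSMul hφ₁ hφ₂ hφ₃, hu, zero_mul]
  exact mul_ne_zero (mul_ne_zero ha hb) hc hzero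

section Laurent

variable {K : Type*} [CommRing K]

lemma algHom_toLaurent {A : Type*} [Semiring A] [Algebra K A] (φ : K[T;T⁻¹] →ₐ[K] A)
    (p : Polynomial K) : φ (Polynomial.toLaurent p) = Polynomial.aeval (φ (T 1)) p := by
  have h : φ.comp Polynomial.toLaurentAlg = Polynomial.aeval (φ (T 1)) := by
    ext1
    simp
  exact AlgHom.congr_fun h p

lemma exists_algHom_T_one_eq {A : Type*} [CommRing A] [Algebra K A] {z : A} (hz : IsUnit z) :
    ∃ φ : K[T;T⁻¹] →ₐ[K] A, φ (T 1) = z := by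
  obtain ⟨z, rfl⟩ := hz
  let φ : K[T;T⁻¹] →ₐ[K] A :=
    { LaurentPolynomial.eval₂ (algebraMap K A) z with
      commutes' := LaurentPolynomial.eval₂_C (algebraMap K A) z }
  refine ⟨φ, (LaurentPolynomial.eval₂_T (algebraMap K A) z 1).trans ?_⟩
  rw [zpow_one]

end Laurent

lemma holSubM_eq_range (K M : Type) [Field K] [AddCommGroup M] [Module K[T;T⁻¹] M] [Module K M]
    [IsScalarTower K K[T;T⁻¹] M] :
    holSubM K M =
      LinearMap.range (tripleSMul K K[T;T⁻¹] M (1 - (T 1 ⊗ₜ T 1) ⊗ₜ T 1)) := by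
  have happly (a b c : M) :
      tripleSMul K K[T;T⁻¹] M (1 - (T 1 ⊗ₜ T 1) ⊗ₜ T 1) ((a ⊗ₜ b) ⊗ₜ c) =
        (a ⊗ₜ b) ⊗ₜ c - (((T 1 : K[T;T⁻¹]) • a) ⊗ₜ ((T 1 : K[T;T⁻¹]) • b)) ⊗ₜ
          ((T 1 : K[T;T⁻¹]) • c) := by
    rw [map_sub, map_one, LinearMap.sub_apply, Module.End.one_apply, tripleSMul_tmul_apply]
  apply le_antisymm
  · refine Submodule.span_le.2 ?_
    rintro _ ⟨a, b, c, rfl⟩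
    exact ⟨(a ⊗ₜ b) ⊗ₜ c, happly a b c⟩
  · rw [← (holSubM K M).ker_mkQ, LinearMap.range_le_ker_iff]
    refine TensorProduct.ext_threefold fun a b c ↦ ?_
    rw [LinearMap.comp_apply, happly]
    exact (Submodule.Quotient.mk_eq_zero _).2 (Submodule.subset_span ⟨a, b, c, rfl⟩)

theorem stmt2_general (K M : Type) [Field K] [AddCommGroup M] [Module K[T;T⁻¹] M] [Module K M]
    [IsScalarTower K K[T;T⁻¹] M] [Module.Finite K[T;T⁻¹] M] (L : Type*) [Field L] [Algebra K L]
    [IsAlgClosed L] (δ : Polynomial K)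
    (hann : Module.annihilator K[T;T⁻¹] M = Ideal.span {Polynomial.toLaurent δ}) :
    Nontrivial (((M ⊗[K] M) ⊗[K] M) ⧸ holSubM K M) ↔
      ∃ z₁ z₂ z₃ : L, Polynomial.aeval z₁ δ = 0 ∧ Polynomial.aeval z₂ δ = 0 ∧
        Polynomial.aeval z₃ δ = 0 ∧ z₁ * z₂ * z₃ = 1 := by
  have hker (φ : K[T;T⁻¹] →ₐ[K] L) : Module.annihilator K[T;T⁻¹] M ≤ RingHom.ker φ ↔
      Polynomial.aeval (φ (T 1)) δ = 0 := by
    rw [hann, Ideal.span_singleton_le_iff_mem, RingHom.mem_ker, algHom_toLaurent]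
  have hpoint (φ₁ φ₂ φ₃ : K[T;T⁻¹] →ₐ[K] L) :
      triplePoint φ₁ φ₂ φ₃ (1 - (T 1 ⊗ₜ T 1) ⊗ₜ T 1) = 0 ↔
        φ₁ (T 1) * φ₂ (T 1) * φ₃ (T 1) = 1 := by
    rw [map_sub, map_one, triplePoint_tmul, sub_eq_zero, eq_comm]
  rw [Submodule.Quotient.nontrivial_iff, holSubM_eq_range]
  constructor
  · intro h
    obtain ⟨φ₁, φ₂, φ₃, h₁, h₂, h₃, hφ⟩ := exists_triplePoint_eq_zero_of_range_ne_top (L := L) h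
    exact ⟨_, _, _, (hker φ₁).1 h₁, (hker φ₂).1 h₂, (hker φ₃).1 h₃, (hpoint φ₁ φ₂ φ₃).1 hφ⟩
  · rintro ⟨z₁, z₂, z₃, h₁, h₂, h₃, hz⟩
    have hunit : IsUnit (z₁ * z₂ * z₃) := hz ▸ isUnit_one
    simp only [IsUnit.mul_iff] at hunit
    obtain ⟨φ₁, rfl⟩ := exists_algHom_T_one_eq (K := K) hunit.1.1
    obtain ⟨φ₂, rfl⟩ := exists_algHom_T_one_eq (K := K) hunit.1.2
    obtain ⟨φ₃, rfl⟩ := exists_algHom_T_one_eq (K := K) hunit.2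
    exact range_tripleSMul_ne_top_of_triplePoint_eq_zero ((hker φ₁).2 h₁) ((hker φ₂).2 h₂)
      ((hker φ₃).2 h₃) ((hpoint φ₁ φ₂ φ₃).2 hz)

theorem stmt2 (𝔄 : Type) [AddCommGroup 𝔄] [Module (LaurentPolynomial ℚ) 𝔄] [Module ℚ 𝔄]
    [IsScalarTower ℚ (LaurentPolynomial ℚ) 𝔄] [Module.Finite (LaurentPolynomial ℚ) 𝔄]
    (δ : Polynomial ℚ) (hδ : δ ≠ 0) (hδ0 : δ.eval 0 ≠ 0)
    (hann : Module.annihilator (LaurentPolynomial ℚ) 𝔄 =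
      Ideal.span {Polynomial.toLaurent δ}) :
    Nontrivial (((𝔄 ⊗[ℚ] 𝔄) ⊗[ℚ] 𝔄) ⧸ holSubM ℚ 𝔄) ↔
      ∃ z₁ z₂ z₃ : ℂ, Polynomial.aeval z₁ δ = 0 ∧ Polynomial.aeval z₂ δ = 0 ∧
        Polynomial.aeval z₃ δ = 0 ∧ z₁ * z₂ * z₃ = 1 :=
  stmt2_general ℚ 𝔄 ℂ δ hann
end
end

section
/- Let q ≥ 1 and for 1 ≤ i ≤ q let π_i ∈ ℚ[t] be irreducible with π_i(0) ≠ 0, let m_i ≥ 1, set δ_i = π_i^{m_i} and A_i = ℚ[t^{±1}]/(δ_i), and let η_i ∈ A_i be the class of 1. Set 𝔄 = ⊕_{i=1}^q A_i, and let ℋ be the quotient of Λ³_ℚ 𝔄 by the ℚ-subspace spanned by all β₁∧β₂∧β₃ − tβ₁∧tβ₂∧tβ₃ with β_j ∈ 𝔄. For a triple (i₁, i₂, i₃) ∈ {1, …, q}³, let ℋ(i₁,i₂,i₃) ⊆ ℋ be the ℚ-span of the classes of t^{k₁}η_{i₁} ∧ t^{k₂}η_{i₂} ∧ t^{k₃}η_{i₃}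 for all k₁, k₂, k₃ ∈ ℤ. Then ℋ(i₁,i₂,i₃) is nonzero if and only if there exist complex roots z₁, z₂, z₃ of δ_{i₁}, δ_{i₂}, δ_{i₃} respectively such that z₁z₂z₃ = 1 and, for each j ∈ {1,2,3}, the multiplicity m_{i_j} is at least the number of indices l ∈ {1,2,3} with i_l = i_j and z_l = z_j. -/
open LaurentPolynomial TensorProduct

set_option synthInstance.maxHeartbeats 1000000
set_option maxHeartbeats 1000000
noncomputable section

/-- The wedge `a ∧ b ∧ c` as an element of the third exterior power. -/
def wedge3 (K : Type) [Field K] (M : Type) [AddCommGroup M] [Module K M] (a b c : M) :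
    ⋀[K]^3 M :=
  ⟨ExteriorAlgebra.ιMulti K 3 ![a, b, c],
    ExteriorAlgebra.ιMulti_range K 3 (Set.mem_range_self _)⟩

/-- The holonomy subspace of the third exterior power: the `K`-span of the elements
`β₁ ∧ β₂ ∧ β₃ - tβ₁ ∧ tβ₂ ∧ tβ₃`. -/
def wedgeHol (K : Type) [Field K] (M : Type) [AddCommGroup M]
    [Module (LaurentPolynomial K) M] [Module K M]
    [IsScalarTower K (LaurentPolynomial K) M] :
    Submodule K ↥(⋀[K]^3 M) :=
  Submodule.span K { x | ∃ a b c : M,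
    x = wedge3 K M a b c -
      wedge3 K M ((T 1 : LaurentPolynomial K) • a) ((T 1 : LaurentPolynomial K) • b)
        ((T 1 : LaurentPolynomial K) • c) }

/-- `ℋ(M)`: the quotient of the third exterior power by the holonomy subspace. -/
abbrev Hcal (K : Type) [Field K] (M : Type) [AddCommGroup M]
    [Module (LaurentPolynomial K) M] [Module K M]
    [IsScalarTower K (LaurentPolynomial K) M] : Type :=
  ↥(⋀[K]^3 M) ⧸ wedgeHol K M

/-!
Write `M` for the direct sum, `φ` for multiplication by `t`, and `δ_i` for the polynomials. A class
`β₁ ∧ β₂ ∧ β₃` is nonzero in `ℋ` iff some `φ`-invariant alternating trilinear map `D` on `M` does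
not vanish at `(β₁, β₂, β₃)`; we let `D` take values in an extension `F` over which the `δ_i` split.

From `D` to roots: `D` and the generators `η_{i₁}, η_{i₂}, η_{i₃}` define a functional
`G : X^e ↦ D (t^{e₁} η_{i₁}, t^{e₂} η_{i₂}, t^{e₃} η_{i₃})` on `F[X₁, X₂, X₃]`. The largest ideal
`𝔍` in the kernel of `G` contains `δ_{i_l}(X_l)`. Multiplying `1 ∉ 𝔍` by successive linear factors
of the `δ_{i_l}(X_l)`, in an order that depends only on `i_l`, while the product stays outside `𝔍`,
one arrives at a maximal product `f`, on which each `X_l` acts modulo `𝔍` as a root `z_l`.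
Invariance of `D` gives `z₁ z₂ z₃ = 1`. If `i_l = i_{l'}` and equally many factors were used in the
slots `l ≠ l'`, then `f` is symmetric in `X_l`, `X_{l'}` and `G f = 0` because `D` is alternating,
so `f ∈ 𝔍`, a contradiction. Hence slots with the same index use distinct factors of `δ_i`, which is
the multiplicity condition.

From roots to `D`: let `Q_i` be the product of the `X - z_l` over the `l` with `i_l = i`. It divides
`δ_i`, so `M` maps to `∏ F[X] / (Q_i)`, a space of dimension three in which the images of suitable
`t^{k_l} η_{i_l}` form a basis. On it `t` acts with determinant `z₁ z₂ z₃ = 1`, so the determinant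
in that basis is invariant.
-/

open Polynomial (X aeval toLaurent)
open scoped Polynomial

/-! ### Invariant alternating maps detect nonzero classes -/

section AlternatingMaps

variable {K : Type} [Field K] {M : Type} [AddCommGroup M] [Module K[T;T⁻¹] M] [Module K M]
  [IsScalarTower K K[T;T⁻¹] M]

theorem apply_eq_zero_of_mk_wedge3_eq_zero {N : Type*} [AddCommGroup N] [Module K N]
    {D : M [⋀^Fin 3]→ₗ[K] N}
    (hD : D.compLinearMap (Algebra.lsmul K K M (T 1 : K[T;T⁻¹])) = D) {a b c : M}
    (h : (Submodule.Quotient.mk (wedge3 K M a b c) : Hcal K M) = 0) : D ![a, b, c] = 0 := by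
  have wedgeHol_le_ker :
      wedgeHol K M ≤ LinearMap.ker (exteriorPower.alternatingMapLinearEquiv D) := by
    rw [wedgeHol, Submodule.span_le]
    rintro _ ⟨a, b, c, rfl⟩
    have hDabc : D ![(T 1 : K[T;T⁻¹]) • a, (T 1 : K[T;T⁻¹]) • b, (T 1 : K[T;T⁻¹]) • c] =
        D ![a, b, c] := by
      rw [← DFunLike.congr_fun hD ![a, b, c], AlternatingMap.compLinearMap_apply]
      exact congrArg D (List.ofFn_injective rfl)
    have apply_wedge3 (a b c : M) :
        exteriorPower.alternatingMapLinearEquiv D (wedge3 K M a b c) = D ![a, b, c] :=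
      exteriorPower.alternatingMapLinearEquiv_apply_ιMulti D _
    rw [SetLike.mem_coe, LinearMap.mem_ker, map_sub, apply_wedge3, apply_wedge3, hDabc, sub_self]
  have hker := wedgeHol_le_ker ((Submodule.Quotient.mk_eq_zero _).mp h)
  exact (exteriorPower.alternatingMapLinearEquiv_apply_ιMulti D _).symm.trans hker

theorem exists_invariant_of_mk_wedge3_ne_zero {a b c : M}
    (h : (Submodule.Quotient.mk (wedge3 K M a b c) : Hcal K M) ≠ 0) :
    ∃ D : M [⋀^Fin 3]→ₗ[K] K,
      D.compLinearMap (Algebra.lsmul K K M (T 1 : K[T;T⁻¹])) = D ∧ D ![a, b, c] ≠ 0 := by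
  obtain ⟨ψ, hψ⟩ : ∃ ψ : Module.Dual K (Hcal K M),
      ψ (Submodule.Quotient.mk (wedge3 K M a b c)) ≠ 0 := by
    by_contra! hzero
    exact h ((Module.forall_dual_apply_eq_zero_iff K _).mp hzero)
  refine ⟨(ψ ∘ₗ (wedgeHol K M).mkQ).compAlternatingMap (exteriorPower.ιMulti K 3), ?_, hψ⟩
  ext v
  refine congrArg ψ (Eq.symm ((Submodule.Quotient.eq _).mpr (Submodule.subset_span ?_)))
  have eta (w : Fin 3 → M) : w = ![w 0, w 1, w 2] := List.ofFn_injective rfl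
  exact ⟨v 0, v 1, v 2, congrArg₂ (· - ·) (congrArg (exteriorPower.ιMulti K 3) (eta v))
    (congrArg (exteriorPower.ιMulti K 3) (eta fun i ↦ (T 1 : K[T;T⁻¹]) • v i))⟩

end AlternatingMaps

/-! ### Assigning roots to indices -/

section FiberPoly

/-- The product of the linear polynomials `X - z_l` over the `l` with `I l = i`. Asking that it
divide `p i` for all `i` says that each `z_l` is a root of `p (I l)`, with multiplicity at least the
number of its repetitions among the roots assigned to the same index. -/
def fiberPoly {κ ι R : Type*} [Fintype κ] [DecidableEq ι] [CommRing R] (I : κ → ι) (z : κ → R)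
    (i : ι) : R[X] :=
  ∏ l with I l = i, (X - Polynomial.C (z l))

variable {κ ι : Type*} [Fintype κ] [DecidableEq ι]

section

variable {R : Type*} [CommRing R] (I : κ → ι) (z : κ → R) (i : ι)

theorem monic_fiberPoly : (fiberPoly I z i).Monic :=
  Polynomial.monic_prod_X_sub_C _ _

theorem natDegree_fiberPoly [Nontrivial R] :
    (fiberPoly I z i).natDegree = Fintype.card {l // I l = i} := by
  rw [fiberPoly, Polynomial.natDegree_finsetProd_X_sub_C_eq_card, Fintype.card_subtype]

theorem coeff_zero_fiberPoly : (fiberPoly I z i).coeff 0 = ∏ l with I l = i, -z l := by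
  simp [fiberPoly, Polynomial.coeff_zero_eq_eval_zero, Polynomial.eval_prod]

theorem fiberPoly_rangeFactorization (i : Set.range I) :
    fiberPoly (Set.rangeFactorization I) z i = fiberPoly I z i := by
  simp only [fiberPoly, Subtype.ext_iff, Set.rangeFactorization_coe]

end

theorem fiberPoly_dvd_prod_range {R : Type*} [CommRing R] {I : κ → ι} {J : κ → ℕ} {i : ι}
    (J_injOn : Set.InjOn J {l | I l = i}) {N : ℕ}
    (hJ : ∀ l, I l = i → J l < N) (s : ι → ℕ → R) :
    fiberPoly I (fun l ↦ s (I l) (J l)) i ∣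
      ∏ j ∈ Finset.range N, (X - Polynomial.C (s i j)) := by
  have fiberPoly_eq : fiberPoly I (fun l ↦ s (I l) (J l)) i =
      ∏ j ∈ ({l | I l = i} : Finset κ).image J, (X - Polynomial.C (s i j)) := by
    rw [fiberPoly, Finset.prod_image (by simpa using J_injOn)]
    refine Finset.prod_congr rfl fun l hl ↦ ?_
    rw [(Finset.mem_filter.mp hl).2]
  rw [fiberPoly_eq]
  refine Finset.prod_dvd_prod_of_subset _ _ _ fun j hj ↦ ?_
  obtain ⟨l, hl, rfl⟩ := Finset.mem_image.mp hj
  exact Finset.mem_range.mpr (hJ l (Finset.mem_filter.mp hl).2)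

variable {F : Type*} [Field F]

theorem fiberPoly_dvd_iff {I : κ → ι} {z : κ → F} {i : ι} {p : F[X]} (hp : p ≠ 0) :
    fiberPoly I z i ∣ p ↔ ∀ a, Nat.card {l // I l = i ∧ z l = a} ≤ p.rootMultiplicity a := by
  classical
  let s : Multiset F := ({l | I l = i} : Finset κ).val.map z
  have count_s (a : F) : s.count a = Nat.card {l // I l = i ∧ z l = a} := by
    rw [Multiset.count_map, ← Finset.filter_val, Finset.card_val, Finset.filter_filter,
      Nat.card_eq_fintype_card, Fintype.card_subtype]
    simp only [eq_comm]
  have fiberPoly_eq : fiberPoly I z i = (s.map (X - Polynomial.C ·)).prod := by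
    rw [Multiset.map_map]
    rfl
  rw [fiberPoly_eq, Multiset.prod_X_sub_C_dvd_iff_le_roots hp, Multiset.le_iff_count]
  simp_rw [count_s, Polynomial.count_roots]

theorem forall_fiberPoly_dvd_iff {I : κ → ι} {z : κ → F} {p : ι → F[X]} (hp : ∀ i, p i ≠ 0) :
    (∀ i, fiberPoly I z i ∣ p i) ↔
      ∀ j, Nat.card {l // I l = I j ∧ z l = z j} ≤ (p (I j)).rootMultiplicity (z j) := by
  simp_rw [fiberPoly_dvd_iff (hp _)]
  refine ⟨fun h j ↦ h (I j) (z j), fun h i a ↦ ?_⟩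
  rcases isEmpty_or_nonempty {l // I l = i ∧ z l = a} with hempty | ⟨⟨j, rfl, rfl⟩⟩
  · rw [Nat.card_of_isEmpty]
    exact Nat.zero_le _
  · exact h j

end FiberPoly

/-! ### Roots from an invariant alternating map -/

section Forward

variable {κ : Type*}

theorem exists_prod_range_notMem_and_mul_mem [Fintype κ] {A : Type*} [CommRing A] {𝔍 : Ideal A}
    (one_notMem : 1 ∉ 𝔍) (y : κ → ℕ → A) (N : κ → ℕ)
    (hN : ∀ l, ∏ j ∈ Finset.range (N l), y l j ∈ 𝔍) :
    ∃ J : κ → ℕ, (∀ l, J l < N l) ∧ ∏ l, ∏ j ∈ Finset.range (J l), y l j ∉ 𝔍 ∧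
      ∀ l, y l (J l) * ∏ l', ∏ j ∈ Finset.range (J l'), y l' j ∈ 𝔍 := by
  classical
  let S : Set (κ → ℕ) := {J | ∏ l, ∏ j ∈ Finset.range (J l), y l j ∉ 𝔍}
  have lt_of_mem {J : κ → ℕ} (hJ : J ∈ S) (l : κ) : J l < N l := by
    contrapose! hJ
    refine not_not_intro (𝔍.mem_of_dvd ?_ (hN l))
    exact (Finset.prod_dvd_prod_of_subset _ _ _ (Finset.range_subset_range.mpr hJ)).trans
      (Finset.dvd_prod_of_mem _ (Finset.mem_univ l))
  have S_finite : S.Finite :=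
    (Set.finite_Iic N).subset fun J hJ l ↦ (lt_of_mem hJ l).le
  obtain ⟨J, hJ⟩ := S_finite.exists_maximal ⟨0, by simpa [S] using one_notMem⟩
  refine ⟨J, lt_of_mem hJ.prop, hJ.prop, fun l ↦ ?_⟩
  by_contra hmem
  have update_mem : Function.update J l (J l + 1) ∈ S := by
    rw [Set.mem_ofPred_eq, ← Finset.mul_prod_erase _ _ (Finset.mem_univ l), Function.update_self,
      Finset.prod_range_succ_comm, mul_assoc]
    rw [← Finset.mul_prod_erase _ _ (Finset.mem_univ l)] at hmem
    convert hmem using 6 with l' hl'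
    rw [Function.update_of_ne (Finset.ne_of_mem_erase hl')]
  have := hJ.le_of_ge update_mem (by simp) l
  simp at this

/-- The largest ideal contained in the kernel of a linear functional `G` on an algebra. -/
def kerIdeal {F A : Type*} [CommRing F] [CommRing A] [Algebra F A] (G : A →ₗ[F] F) : Ideal A where
  carrier := {f | ∀ h, G (h * f) = 0}
  add_mem' hf hg h := by rw [mul_add, map_add, hf, hg, add_zero]
  zero_mem' h := by rw [mul_zero, map_zero]
  smul_mem' c f hf h := by rw [smul_eq_mul, ← mul_assoc, hf]

theorem apply_mul_eq_eval_mul {F : Type*} [CommRing F] {G : MvPolynomial κ F →ₗ[F] F} {z : κ → F}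
    {f : MvPolynomial κ F} (hf : ∀ l, (MvPolynomial.X l - MvPolynomial.C (z l)) * f ∈ kerIdeal G)
    (h : MvPolynomial κ F) : G (h * f) = MvPolynomial.eval z h * G f := by
  induction h using MvPolynomial.induction_on with
  | C a => rw [← MvPolynomial.smul_eq_C_mul, map_smul, MvPolynomial.eval_C, smul_eq_mul]
  | add p q hp hq => rw [add_mul, map_add, hp, hq, map_add, add_mul]
  | mul_X p l hp =>
    have : G (p * ((MvPolynomial.X l - MvPolynomial.C (z l)) * f)) = 0 := hf l p
    rw [show p * ((MvPolynomial.X l - MvPolynomial.C (z l)) * f) =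
      p * MvPolynomial.X l * f - z l • (p * f) by rw [MvPolynomial.smul_eq_C_mul]; ring,
      map_sub, map_smul, hp, sub_eq_zero] at this
    rw [this, map_mul, MvPolynomial.eval_X, smul_eq_mul]
    ring

variable {K F M : Type*} [CommRing K] [CommRing F] [Algebra K F] [AddCommGroup M] [Module K M]

/-- The functional on `F[X_l : l ∈ κ]` sending the monomial with exponent `e` to the value of `D` at
the family `φ ^ e_l (v_l)`. It extends the scalars of `D` from `K` to `F`, so that `D` can be
evaluated on eigenvectors of `φ`, and multiplication by `X_l` amounts to `φ` acting on slot `l`. -/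
def momentFunctional (φ : Module.End K M) (D : MultilinearMap K (fun _ : κ ↦ M) F) (v : κ → M) :
    MvPolynomial κ F →ₗ[F] F :=
  (MvPolynomial.basisMonomials κ F).constr F fun e ↦ D fun l ↦ (φ ^ e l) (v l)

section

variable {φ : Module.End K M} {v : κ → M}

theorem momentFunctional_monomial (D : MultilinearMap K (fun _ : κ ↦ M) F) (e : κ →₀ ℕ) (a : F) :
    momentFunctional φ D v (MvPolynomial.monomial e a) = a * D fun l ↦ (φ ^ e l) (v l) := by
  have basis_apply : momentFunctional φ D v (MvPolynomial.monomial e 1) =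
      D fun l ↦ (φ ^ e l) (v l) :=
    (MvPolynomial.basisMonomials κ F).constr_basis F _ e
  rw [← basis_apply, ← smul_eq_mul, ← map_smul, MvPolynomial.smul_monomial, smul_eq_mul, mul_one]

theorem momentFunctional_toMvPolynomial_mul_monomial [DecidableEq κ]
    (D : MultilinearMap K (fun _ : κ ↦ M) F) (l : κ) (p : K[X]) (e : κ →₀ ℕ) :
    momentFunctional φ D v
        ((p.map (algebraMap K F)).toMvPolynomial l * MvPolynomial.monomial e 1) =
      D (Function.update (fun l' ↦ (φ ^ e l') (v l')) l ((φ ^ e l) (aeval φ p (v l)))) := by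
  induction p using Polynomial.induction_on' with
  | add p q hp hq => simp only [Polynomial.map_add, map_add, add_mul, hp, hq, LinearMap.add_apply,
      MultilinearMap.map_update_add]
  | monomial n a =>
    have toMvPolynomial_monomial : (Polynomial.monomial n (algebraMap K F a)).toMvPolynomial l =
        MvPolynomial.monomial (Finsupp.single l n) (algebraMap K F a) := by
      rw [← Polynomial.C_mul_X_pow_eq_monomial, map_mul, map_pow, Polynomial.toMvPolynomial_C,
        Polynomial.toMvPolynomial_X, MvPolynomial.X_pow_eq_monomial, MvPolynomial.C_mul_monomial,
        mul_one]
    rw [Polynomial.map_monomial, toMvPolynomial_monomial, MvPolynomial.monomial_mul, mul_one,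
      momentFunctional_monomial, Polynomial.aeval_monomial, ← Algebra.smul_def, ← Algebra.smul_def,
      LinearMap.smul_apply, map_smul, D.map_update_smul]
    congr 2 with l'
    rcases eq_or_ne l' l with rfl | hl'
    · simp [add_comm n, pow_add]
    · simp [hl', Finsupp.single_eq_of_ne hl']

theorem toMvPolynomial_mem_kerIdeal (D : MultilinearMap K (fun _ : κ ↦ M) F) {l : κ} {p : K[X]}
    (hp : aeval φ p (v l) = 0) :
    (p.map (algebraMap K F)).toMvPolynomial l ∈ kerIdeal (momentFunctional φ D v) := by
  classical
  intro h
  induction h using MvPolynomial.induction_on' with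
  | monomial e a =>
    have monomial_eq : MvPolynomial.monomial e a = a • MvPolynomial.monomial e (1 : F) := by
      rw [MvPolynomial.smul_monomial, smul_eq_mul, mul_one]
    rw [mul_comm, monomial_eq, mul_smul_comm, map_smul,
      momentFunctional_toMvPolynomial_mul_monomial, hp, map_zero,
      D.map_coord_zero l (Function.update_self ..), smul_zero]
  | add p q hp hq => rw [add_mul, map_add, hp, hq, add_zero]

theorem momentFunctional_prod_X_mul [Fintype κ] {D : MultilinearMap K (fun _ : κ ↦ M) F}
    (hD : D.compLinearMap (fun _ ↦ φ) = D) (f : MvPolynomial κ F) :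
    momentFunctional φ D v ((∏ l, MvPolynomial.X l) * f) = momentFunctional φ D v f := by
  induction f using MvPolynomial.induction_on' with
  | monomial e a =>
    have prod_X : ∏ l, MvPolynomial.X l =
        (MvPolynomial.monomial (∑ l : κ, Finsupp.single l 1) 1 : MvPolynomial κ F) :=
      (MvPolynomial.monomial_sum_one _ _).symm
    have sum_single_apply (l : κ) : (∑ l' : κ, Finsupp.single l' 1) l = 1 := by
      classical simp [Finsupp.finsetSum_apply, Finsupp.single_apply]
    rw [prod_X, MvPolynomial.monomial_mul, one_mul, momentFunctional_monomial,
      momentFunctional_monomial]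
    nth_rw 2 [← hD]
    simp only [Finsupp.add_apply, sum_single_apply, pow_add, pow_one,
      MultilinearMap.compLinearMap_apply, Module.End.mul_apply]
  | add p q hp hq => rw [mul_add, map_add, hp, hq, map_add]

theorem momentFunctional_eq_zero_of_rename_swap [DecidableEq κ] (D : M [⋀^κ]→ₗ[K] F) {l l' : κ}
    (hne : l ≠ l') (hv : v l = v l') {f : MvPolynomial κ F}
    (hf : MvPolynomial.rename (Equiv.swap l l') f = f) :
    momentFunctional φ D.toMultilinearMap v f = 0 := by
  have coeff_swap (e : κ →₀ ℕ) :
      f.coeff (e.equivMapDomain (Equiv.swap l l')) = f.coeff e := by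
    conv_lhs => rw [← hf, Finsupp.equivMapDomain_eq_mapDomain]
    exact MvPolynomial.coeff_rename_mapDomain _ (Equiv.injective _) f e
  have pow_swap (e : κ →₀ ℕ) :
      (fun j ↦ (φ ^ e.equivMapDomain (Equiv.swap l l') j) (v j)) =
        (fun j ↦ (φ ^ e j) (v j)) ∘ Equiv.swap l l' := by
    funext j
    simp [Equiv.apply_swap_eq_self hv]
  rw [f.as_sum, map_sum]
  simp_rw [momentFunctional_monomial]
  refine Finset.sum_involution (fun e _ ↦ e.equivMapDomain (Equiv.swap l l')) ?_ ?_ ?_ ?_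
  · intro e _
    rw [coeff_swap, pow_swap, AlternatingMap.coe_multilinearMap, D.map_swap _ hne, mul_neg,
      add_neg_cancel]
  · intro e _ hne_zero hfixed
    have he : e l = e l' := by
      rw [← Equiv.swap_apply_right l l', ← Equiv.symm_swap, ← Finsupp.equivMapDomain_apply, hfixed]
    refine hne_zero (mul_eq_zero_of_right _ (D.map_eq_zero_of_eq _ ?_ hne))
    simp only [he, hv]
  · intro e he
    rw [MvPolynomial.mem_support_iff] at he ⊢
    rwa [coeff_swap]
  · intro e _
    ext j
    simp

end

theorem exists_associated_prod_range_X_sub_C {F : Type*} [Field F] {p : F[X]} (hp : p.Splits)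
    (hp0 : p ≠ 0) :
    ∃ (N : ℕ) (s : ℕ → F), Associated (∏ j ∈ Finset.range N, (X - Polynomial.C (s j))) p := by
  refine ⟨p.roots.toList.length, fun j ↦ p.roots.toList.getD j 0, ?_⟩
  have prod_eq : ∏ j ∈ Finset.range p.roots.toList.length,
      (X - Polynomial.C (p.roots.toList.getD j 0)) = (p.roots.map (X - Polynomial.C ·)).prod := by
    simp_rw [Finset.prod_range, List.getD_eq_getElem _ _ (Fin.is_lt _)]
    rw [Fin.prod_univ_fun_getElem _ (X - Polynomial.C ·), ← Multiset.prod_coe, ← Multiset.map_coe,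
      Multiset.coe_toList]
  conv_rhs => rw [hp.eq_prod_roots]
  rw [prod_eq]
  exact associated_unit_mul_right _ _
    (Polynomial.isUnit_C.mpr (Polynomial.leadingCoeff_ne_zero.mpr hp0).isUnit)

theorem rename_swap_prod_range [Fintype κ] [DecidableEq κ] {y : κ → ℕ → F} {J : κ → ℕ} {l l' : κ}
    (hy : y l = y l') (hJ : J l = J l') :
    MvPolynomial.rename (Equiv.swap l l')
        (∏ i, ∏ j ∈ Finset.range (J i), (MvPolynomial.X i - MvPolynomial.C (y i j))) =
      ∏ i, ∏ j ∈ Finset.range (J i), (MvPolynomial.X i - MvPolynomial.C (y i j)) := by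
  nth_rw 1 [← Equiv.prod_comp (Equiv.swap l l')]
  simp only [map_prod, map_sub, MvPolynomial.rename_X, MvPolynomial.rename_C,
    Equiv.apply_swap_eq_self hy, Equiv.apply_swap_eq_self hJ, Equiv.swap_apply_self]

theorem exists_prod_eq_one_and_fiberPoly_dvd {F ι : Type*} [Field F] [Algebra K F] [DecidableEq ι]
    [Fintype κ] {φ : Module.End K M} {D : M [⋀^κ]→ₗ[K] F} (hD : D.compLinearMap φ = D)
    {p : ι → K[X]} (hp : ∀ i, ((p i).map (algebraMap K F)).Splits)
    (hp0 : ∀ i, (p i).map (algebraMap K F) ≠ 0)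
    {v : ι → M} (hv : ∀ i, aeval φ (p i) (v i) = 0) {I : κ → ι} {k : κ → ℕ}
    (hDv : D (fun l ↦ (φ ^ k l) (v (I l))) ≠ 0) :
    ∃ z : κ → F, ∏ l, z l = 1 ∧ ∀ i, fiberPoly I z i ∣ (p i).map (algebraMap K F) := by
  classical
  choose N s hs using fun i ↦ exists_associated_prod_range_X_sub_C (hp i) (hp0 i)
  let G : MvPolynomial κ F →ₗ[F] F := momentFunctional φ D.toMultilinearMap (v ∘ I)
  have one_notMem : 1 ∉ kerIdeal G := fun hmem ↦ hDv <| by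
    have := hmem (MvPolynomial.monomial (Finsupp.equivFunOnFinite.symm k) 1)
    rwa [mul_one, momentFunctional_monomial, one_mul] at this
  have prod_mem (l : κ) : ∏ j ∈ Finset.range (N (I l)),
      (MvPolynomial.X l - MvPolynomial.C (s (I l) j)) ∈ kerIdeal G := by
    have := (kerIdeal G).mem_of_dvd ((hs (I l)).symm.map (Polynomial.toMvPolynomial l)).dvd
      (toMvPolynomial_mem_kerIdeal D.toMultilinearMap (v := v ∘ I) (hv (I l)))
    simpa using this
  obtain ⟨J, hJ, hf, hmul⟩ := exists_prod_range_notMem_and_mul_mem one_notMem _ _ prod_mem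
  set f := ∏ l, ∏ j ∈ Finset.range (J l), (MvPolynomial.X l - MvPolynomial.C (s (I l) j))
  have G_ne_zero : G f ≠ 0 := fun hGf ↦
    hf fun h ↦ by rw [apply_mul_eq_eval_mul hmul, hGf, mul_zero]
  refine ⟨fun l ↦ s (I l) (J l), ?_, fun i ↦ ?_⟩
  · have hinv : G ((∏ l, MvPolynomial.X l) * f) = G f :=
      momentFunctional_prod_X_mul (congrArg AlternatingMap.toMultilinearMap hD :) f
    rw [apply_mul_eq_eval_mul hmul, mul_eq_right₀ G_ne_zero] at hinv
    simpa using hinv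
  · have J_injOn : Set.InjOn J {l | I l = i} := by
      intro l (hl : I l = i) l' (hl' : I l' = i) hJll'
      by_contra hne
      have hI : I l = I l' := hl.trans hl'.symm
      exact G_ne_zero (momentFunctional_eq_zero_of_rename_swap D hne (congrArg v hI)
        (rename_swap_prod_range (congrArg s hI) hJll'))
    exact (fiberPoly_dvd_prod_range J_injOn (fun l hl ↦ hl ▸ hJ l) s).trans (hs i).dvd

end Forward

/-! ### An invariant alternating map from roots -/

section Backward

theorem det_blockDiagonal' {R ι : Type*} [CommRing R] [Fintype ι] [DecidableEq ι] {m : ι → Type*}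
    [∀ i, Fintype (m i)] [∀ i, DecidableEq (m i)] (A : ∀ i, Matrix (m i) (m i) R) :
    (Matrix.blockDiagonal' A).det = ∏ i, (A i).det := by
  let : LinearOrder ι := IsWellOrder.linearOrder WellOrderingRel
  rw [(Matrix.blockTriangular_blockDiagonal' A).det_fintype]
  refine Finset.prod_congr rfl fun i _ ↦ ?_
  rw [← Matrix.det_submatrix_equiv_self (Equiv.sigmaSubtype i).symm]
  congr 1
  ext a b
  exact Matrix.blockDiagonal'_apply_eq A i a b

theorem algebraNorm_pi {R ι : Type*} [CommRing R] [Fintype ι] {A : ι → Type*} [∀ i, CommRing (A i)]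
    [∀ i, Algebra R (A i)] [∀ i, Module.Free R (A i)] [∀ i, Module.Finite R (A i)]
    (x : ∀ i, A i) : Algebra.norm R x = ∏ i, Algebra.norm R (x i) := by
  classical
  let b (i : ι) := Module.Free.chooseBasis R (A i)
  have leftMulMatrix_pi : Algebra.leftMulMatrix (Pi.basis b) x =
      Matrix.blockDiagonal' fun i ↦ Algebra.leftMulMatrix (b i) (x i) := by
    ext ⟨i, a⟩ ⟨j, c⟩
    rw [Algebra.leftMulMatrix_eq_repr_mul, Pi.basis_apply, Pi.basis_repr]
    rcases eq_or_ne i j with rfl | hne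
    · rw [Matrix.blockDiagonal'_apply_eq, Algebra.leftMulMatrix_eq_repr_mul, Pi.mul_apply,
        Pi.single_eq_same]
    · rw [Matrix.blockDiagonal'_apply_ne _ _ _ hne, Pi.mul_apply, Pi.single_eq_of_ne hne, mul_zero,
        map_zero, Finsupp.zero_apply]
  simp_rw [Algebra.norm_eq_matrix_det (Pi.basis b), leftMulMatrix_pi, det_blockDiagonal',
    ← Algebra.norm_eq_matrix_det (b _)]

section

variable {κ ι F : Type*} [Fintype κ] [DecidableEq ι] [Field F] (I : κ → ι) (z : κ → F) (i : ι)

theorem norm_root_fiberPoly :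
    Algebra.norm F (AdjoinRoot.root (fiberPoly I z i)) = ∏ l with I l = i, z l := by
  have hmonic := monic_fiberPoly I z i
  have minpoly_root : minpoly F (AdjoinRoot.root (fiberPoly I z i)) = fiberPoly I z i := by
    rw [AdjoinRoot.minpoly_root hmonic.ne_zero, hmonic.leadingCoeff, inv_one, map_one, mul_one]
  rw [← AdjoinRoot.powerBasis'_gen hmonic, Algebra.PowerBasis.norm_gen_eq_coeff_zero_minpoly,
    AdjoinRoot.powerBasis'_gen, AdjoinRoot.powerBasis'_dim, minpoly_root, coeff_zero_fiberPoly,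
    natDegree_fiberPoly, Fintype.card_subtype, Finset.prod_neg, ← mul_assoc, ← mul_pow,
    neg_one_mul, neg_neg, one_pow, one_mul]

theorem norm_root_fiberPoly_pi [Finite ι] :
    Algebra.norm F (fun i ↦ AdjoinRoot.root (fiberPoly I z i)) = ∏ l, z l := by
  have := Fintype.ofFinite ι
  have (i : ι) := (monic_fiberPoly I z i).free_adjoinRoot
  have (i : ι) := (monic_fiberPoly I z i).finite_adjoinRoot
  rw [algebraNorm_pi]
  simp_rw [norm_root_fiberPoly]
  exact Finset.prod_fiberwise _ _ _

theorem exists_basis_single_root_pow [Finite ι] :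
    ∃ (b : Module.Basis κ F (∀ i, AdjoinRoot (fiberPoly I z i))) (k : κ → ℕ),
      ∀ l, b l = Pi.single (I l) (AdjoinRoot.root (fiberPoly I z (I l)) ^ k l) := by
  have := Fintype.ofFinite ι
  let powerBasis (i : ι) := AdjoinRoot.powerBasis' (monic_fiberPoly I z i)
  have equiv_fiber (i : ι) : Fin (powerBasis i).dim ≃ {l // I l = i} :=
    (finCongr (natDegree_fiberPoly I z i)).trans (Fintype.equivFin _).symm
  let e : (Σ i, Fin (powerBasis i).dim) ≃ κ :=
    (Equiv.sigmaCongrRight equiv_fiber).trans (Equiv.sigmaFiberEquiv I)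
  have I_e (x) : I (e x) = x.1 := (equiv_fiber x.1 x.2).2
  refine ⟨(Pi.basis fun i ↦ (powerBasis i).basis).reindex e, fun l ↦ (e.symm l).2, fun l ↦ ?_⟩
  obtain ⟨⟨i, n⟩, rfl⟩ := e.surjective l
  beta_reduce
  rw [Module.Basis.reindex_apply, e.symm_apply_apply, Pi.basis_apply, PowerBasis.basis_eq_pow,
    AdjoinRoot.powerBasis'_gen, I_e]

theorem exists_alternatingMap_pi_adjoinRoot [Finite ι] {z : κ → F} (hz : ∏ l, z l = 1) :
    ∃ (D : (∀ i, AdjoinRoot (fiberPoly I z i)) [⋀^κ]→ₗ[F] F) (k : κ → ℕ),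
      D.compLinearMap (Algebra.lmul F _ fun i ↦ AdjoinRoot.root (fiberPoly I z i)) = D ∧
        D (fun l ↦ Pi.single (I l) (AdjoinRoot.root (fiberPoly I z (I l)) ^ k l)) ≠ 0 := by
  classical
  obtain ⟨b, k, hb⟩ := exists_basis_single_root_pow I z
  refine ⟨b.det, k, ?_, ?_⟩
  · ext v
    have det_comp := b.det_comp (Algebra.lmul F _ fun i ↦ AdjoinRoot.root (fiberPoly I z i)) v
    rwa [← Algebra.norm_apply, norm_root_fiberPoly_pi, hz, one_mul] at det_comp
  · simp_rw [← hb]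
    exact b.det_self.trans_ne one_ne_zero

end

theorem isUnit_root {F : Type*} [Field F] {p : F[X]} (hp : p.coeff 0 ≠ 0) :
    IsUnit (AdjoinRoot.root p) := by
  have root_mul : AdjoinRoot.root p * AdjoinRoot.mk p p.divX = AdjoinRoot.of p (-p.coeff 0) := by
    have mk_eq_zero : AdjoinRoot.mk p (p.divX * X + Polynomial.C (p.coeff 0)) = 0 := by
      rw [p.divX_mul_X_add, AdjoinRoot.mk_self]
    rw [map_add, map_mul, AdjoinRoot.mk_X, AdjoinRoot.mk_C, mul_comm] at mk_eq_zero
    rw [map_neg, eq_neg_of_add_eq_zero_left mk_eq_zero]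
  refine isUnit_of_mul_isUnit_left (y := AdjoinRoot.mk p p.divX) ?_
  exact root_mul ▸ (neg_ne_zero.mpr hp).isUnit.map _

theorem exists_algHom_adjoinRoot {K : Type} {F : Type*} [Field K] [Field F] [Algebra K F]
    {p : F[X]} (hp : p.coeff 0 ≠ 0) {δ : K[X]} (hδ : p ∣ δ.map (algebraMap K F)) :
    ∃ ψ : LQuot K (toLaurent δ) →ₐ[K] AdjoinRoot p,
      ∀ n : ℕ, ψ (Ideal.Quotient.mk _ (T n)) = AdjoinRoot.root p ^ n := by
  obtain ⟨u, hu⟩ := isUnit_root hp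
  let χ : K[T;T⁻¹] →ₐ[K] AdjoinRoot p :=
    { LaurentPolynomial.eval₂ (algebraMap K (AdjoinRoot p)) u with
      commutes' := fun a ↦ LaurentPolynomial.eval₂_C .. }
  have χ_toLaurent : χ (toLaurent δ) = 0 := by
    refine (LaurentPolynomial.eval₂_toLaurent _ _ _).trans ?_
    rw [hu, IsScalarTower.algebraMap_eq K F, ← Polynomial.eval₂_map]
    exact (AdjoinRoot.aeval_eq _).trans (AdjoinRoot.mk_eq_zero.mpr hδ)
  refine ⟨Ideal.Quotient.liftₐ _ χ fun a ha ↦ ?_, fun n ↦ ?_⟩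
  · obtain ⟨c, rfl⟩ := Ideal.mem_span_singleton'.mp ha
    rw [map_mul, χ_toLaurent, mul_zero]
  · rw [← hu]
    exact LaurentPolynomial.eval₂_T_n ..

/-- Restriction of scalars of an alternating map along `K → F`. -/
def restrictScalarsAlternating (K : Type*) {F κ V N : Type*} [CommSemiring K] [CommSemiring F]
    [Algebra K F] [AddCommMonoid V] [Module K V] [Module F V] [IsScalarTower K F V]
    [AddCommMonoid N] [Module K N] [Module F N] [IsScalarTower K F N] (D : V [⋀^κ]→ₗ[F] N) :
    V [⋀^κ]→ₗ[K] N :=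
  { D.toMultilinearMap.restrictScalars K with
    map_eq_zero_of_eq' := D.map_eq_zero_of_eq' }

theorem exists_linearMap_pi_adjoinRoot {K : Type} {F : Type*} {ι : Type} [Field K] [Field F]
    [Algebra K F] [DecidableEq ι] {δ : ι → K[X]} {s : Set ι} {p : s → F[X]}
    (hp : ∀ i, (p i).coeff 0 ≠ 0) (hδ : ∀ i : s, p i ∣ (δ i).map (algebraMap K F)) :
    ∃ Ψ : DirectSum ι (fun i ↦ LQuot K (toLaurent (δ i))) →ₗ[K] ∀ i, AdjoinRoot (p i),
      (∀ x, Ψ ((T 1 : K[T;T⁻¹]) • x) = (fun i ↦ AdjoinRoot.root (p i)) * Ψ x) ∧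
        ∀ (i : s) (n : ℕ), Ψ ((T n : K[T;T⁻¹]) • DirectSum.of _ (i : ι) 1) =
          Pi.single i (AdjoinRoot.root (p i) ^ n) := by
  choose ψ hψ using fun i ↦ exists_algHom_adjoinRoot (hp i) (hδ i)
  refine ⟨LinearMap.pi fun i ↦ (ψ i).toLinearMap ∘ₗ DirectSum.component K ι _ i, ?_, ?_⟩
  · intro x
    ext i
    change ψ i (Ideal.Quotient.mk _ (T 1) * x i) = AdjoinRoot.root (p i) * ψ i (x i)
    rw [map_mul, ← Nat.cast_one, hψ, pow_one]
  · intro i n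
    ext j
    rw [← DirectSum.of_smul]
    change ψ j (DirectSum.of (fun i ↦ LQuot K (toLaurent (δ i))) i ((T n : K[T;T⁻¹]) • 1) j) = _
    rcases eq_or_ne j i with rfl | hne
    · rw [DirectSum.of_eq_same, Pi.single_eq_same, ← hψ, ← Algebra.algebraMap_eq_smul_one]
      rfl
    · rw [DirectSum.of_eq_of_ne _ _ _ (Subtype.coe_ne_coe.mpr hne), Pi.single_eq_of_ne hne,
        map_zero]

theorem exists_invariant_of_fiberPoly_dvd {K : Type} {F κ : Type*} {ι : Type} [Field K] [Field F]
    [Algebra K F] [Fintype κ] [DecidableEq ι] {δ : ι → K[X]} {I : κ → ι} {z : κ → F}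
    (hz : ∏ l, z l = 1) (hδ : ∀ i, fiberPoly I z i ∣ (δ i).map (algebraMap K F)) :
    ∃ (D : DirectSum ι (fun i ↦ LQuot K (toLaurent (δ i))) [⋀^κ]→ₗ[K] F) (k : κ → ℕ),
      D.compLinearMap (Algebra.lsmul K K _ (T 1 : K[T;T⁻¹])) = D ∧
        D (fun l ↦ (T (k l) : K[T;T⁻¹]) • DirectSum.of _ (I l) 1) ≠ 0 := by
  have z_ne_zero (l : κ) : z l ≠ 0 := fun h ↦ by
    simp [Finset.prod_eq_zero (Finset.mem_univ l) h] at hz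
  obtain ⟨D, k, hD, hDk⟩ := exists_alternatingMap_pi_adjoinRoot (Set.rangeFactorization I) hz
  obtain ⟨Ψ, Ψ_T_smul, Ψ_of⟩ := exists_linearMap_pi_adjoinRoot (δ := δ)
    (p := fiberPoly (Set.rangeFactorization I) z)
    (fun i ↦ by simp [coeff_zero_fiberPoly, Finset.prod_ne_zero_iff, z_ne_zero])
    (fun i ↦ (fiberPoly_rangeFactorization I z i).dvd.trans (hδ i))
  refine ⟨(restrictScalarsAlternating K D).compLinearMap Ψ, k, ?_, ?_⟩
  · ext x
    have := DFunLike.congr_fun hD (Ψ ∘ x)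
    refine Eq.trans (congrArg D ?_) this
    exact funext fun l ↦ Ψ_T_smul (x l)
  · refine ne_of_eq_of_ne (congrArg D (funext fun l ↦ ?_)) hDk
    exact Ψ_of (Set.rangeFactorization I l) (k l)

end Backward

section

variable {K ι : Type} {F κ : Type*} [Field K] [Field F] [Algebra K F] [Fintype κ] [DecidableEq ι]
  {δ : ι → K[X]}

theorem aeval_T_one (p : K[X]) : aeval (T 1 : K[T;T⁻¹]) p = toLaurent p := by
  rw [← Polynomial.toLaurent_X, ← Polynomial.toLaurentAlg_apply, Polynomial.aeval_algHom_apply,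
    Polynomial.aeval_X_left_apply, Polynomial.toLaurentAlg_apply]

theorem toLaurent_smul_of_one (i : ι) :
    toLaurent (δ i) • DirectSum.of (fun i ↦ LQuot K (toLaurent (δ i))) i 1 = 0 := by
  rw [← DirectSum.of_smul, ← Algebra.algebraMap_eq_smul_one, Ideal.Quotient.algebraMap_eq,
    Ideal.Quotient.eq_zero_iff_mem.mpr (Ideal.mem_span_singleton_self _), map_zero]

theorem exists_fiberPoly_dvd_of_invariant
    (hδ : ∀ i, ((δ i).map (algebraMap K F)).Splits) (hδ0 : ∀ i, δ i ≠ 0)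
    {D : DirectSum ι (fun i ↦ LQuot K (toLaurent (δ i))) [⋀^κ]→ₗ[K] F}
    (hD : D.compLinearMap (Algebra.lsmul K K _ (T 1 : K[T;T⁻¹])) = D) {I : κ → ι} {k : κ → ℤ}
    (hDk : D (fun l ↦ (T (k l) : K[T;T⁻¹]) • DirectSum.of _ (I l) 1) ≠ 0) :
    ∃ z : κ → F, ∏ l, z l = 1 ∧ ∀ i, fiberPoly I z i ∣ (δ i).map (algebraMap K F) := by
  obtain ⟨N, hN⟩ := (Set.finite_range k).bddBelow
  have k_sub (l : κ) : ((k l - N).toNat : ℤ) = k l - N :=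
    Int.toNat_of_nonneg (sub_nonneg.mpr (hN (Set.mem_range_self l)))
  let η (i : ι) := DirectSum.of (fun i ↦ LQuot K (toLaurent (δ i))) i 1
  refine exists_prod_eq_one_and_fiberPoly_dvd hD hδ (fun i ↦ Polynomial.map_ne_zero (hδ0 i))
    (v := fun i ↦ (T N : K[T;T⁻¹]) • η i) (fun i ↦ ?_) (k := fun l ↦ (k l - N).toNat) ?_
  · rw [Polynomial.aeval_algHom_apply, aeval_T_one]
    change toLaurent (δ i) • (T N : K[T;T⁻¹]) • η i = 0
    rw [smul_comm, toLaurent_smul_of_one, smul_zero]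
  · convert hDk using 3 with l
    rw [← map_pow, T_pow, mul_one, k_sub]
    change (T (k l - N) : K[T;T⁻¹]) • (T N : K[T;T⁻¹]) • η (I l) = _
    rw [smul_smul, ← T_add, sub_add_cancel]

theorem exists_mk_wedge3_ne_zero_iff (hδ : ∀ i, ((δ i).map (algebraMap K F)).Splits)
    (hδ0 : ∀ i, δ i ≠ 0) (i₁ i₂ i₃ : ι) :
    (∃ k₁ k₂ k₃ : ℤ, (Submodule.Quotient.mk (wedge3 K _
      ((T k₁ : K[T;T⁻¹]) • DirectSum.of (fun i ↦ LQuot K (toLaurent (δ i))) i₁ 1)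
      ((T k₂ : K[T;T⁻¹]) • DirectSum.of (fun i ↦ LQuot K (toLaurent (δ i))) i₂ 1)
      ((T k₃ : K[T;T⁻¹]) • DirectSum.of (fun i ↦ LQuot K (toLaurent (δ i))) i₃ 1)) :
        Hcal K (DirectSum ι (fun i ↦ LQuot K (toLaurent (δ i))))) ≠ 0) ↔
      ∃ z : Fin 3 → F, ∏ l, z l = 1 ∧
        ∀ i, fiberPoly ![i₁, i₂, i₃] z i ∣ (δ i).map (algebraMap K F) := by
  constructor
  · rintro ⟨k₁, k₂, k₃, hk⟩
    obtain ⟨D, hD, hDk⟩ := exists_invariant_of_mk_wedge3_ne_zero hk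
    refine exists_fiberPoly_dvd_of_invariant hδ hδ0
      (D := (Algebra.linearMap K F).compAlternatingMap D) (k := ![k₁, k₂, k₃]) ?_ ?_
    · ext x
      exact congrArg (algebraMap K F) (DFunLike.congr_fun hD x)
    · refine (map_ne_zero (algebraMap K F)).mpr (ne_of_eq_of_ne (congrArg D ?_) hDk)
      exact List.ofFn_injective rfl
  · rintro ⟨z, hz, hdvd⟩
    obtain ⟨D, k, hD, hDk⟩ := exists_invariant_of_fiberPoly_dvd hz hdvd
    refine ⟨k 0, k 1, k 2, fun hzero ↦ hDk ?_⟩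
    rw [← apply_eq_zero_of_mk_wedge3_eq_zero hD hzero]
    exact congrArg D (List.ofFn_injective rfl)

theorem stmt3_general (hδ : ∀ i, ((δ i).map (algebraMap K F)).Splits) (hδ0 : ∀ i, δ i ≠ 0)
    (i₁ i₂ i₃ : ι) :
    (Submodule.span K { x : Hcal K (DirectSum ι (fun i ↦ LQuot K (toLaurent (δ i)))) |
        ∃ k₁ k₂ k₃ : ℤ, x = Submodule.Quotient.mk (wedge3 K _
          ((T k₁ : K[T;T⁻¹]) • DirectSum.of (fun i ↦ LQuot K (toLaurent (δ i))) i₁ 1)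
          ((T k₂ : K[T;T⁻¹]) • DirectSum.of (fun i ↦ LQuot K (toLaurent (δ i))) i₂ 1)
          ((T k₃ : K[T;T⁻¹]) • DirectSum.of (fun i ↦ LQuot K (toLaurent (δ i))) i₃ 1)) } ≠ ⊥) ↔
      ∃ z₁ z₂ z₃ : F, z₁ * z₂ * z₃ = 1 ∧
        ∀ j : Fin 3, Nat.card {l : Fin 3 //
            ![i₁, i₂, i₃] l = ![i₁, i₂, i₃] j ∧ ![z₁, z₂, z₃] l = ![z₁, z₂, z₃] j} ≤
          ((δ (![i₁, i₂, i₃] j)).map (algebraMap K F)).rootMultiplicity (![z₁, z₂, z₃] j) := by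
  rw [Ne, Submodule.span_eq_bot]
  have map_δ_ne_zero (i : ι) : (δ i).map (algebraMap K F) ≠ 0 := Polynomial.map_ne_zero (hδ0 i)
  have := exists_mk_wedge3_ne_zero_iff hδ hδ0 i₁ i₂ i₃
  simp_rw [forall_fiberPoly_dvd_iff map_δ_ne_zero, ← FinVec.exists_iff (m := 3)] at this
  refine Iff.trans ?_ (this.trans ?_)
  · simp
  · simp [FinVec.Exists, Fin.prod_univ_three]

end

theorem le_rootMultiplicity_map_pow_iff {K F : Type*} [Field K] [Field F] [Algebra K F]
    {π : K[X]} (hπ : π.Separable) (m : ℕ) (z : F) {n : ℕ} (hn : 0 < n) :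
    n ≤ ((π ^ m).map (algebraMap K F)).rootMultiplicity z ↔ aeval z (π ^ m) = 0 ∧ n ≤ m := by
  classical
  have hmap_ne_zero : π.map (algebraMap K F) ≠ 0 := Polynomial.map_ne_zero hπ.ne_zero
  have hle_one : (π.map (algebraMap K F)).rootMultiplicity z ≤ 1 :=
    Polynomial.rootMultiplicity_le_one_of_separable (hπ.map) z
  have hpow : ((π ^ m).map (algebraMap K F)).rootMultiplicity z =
      m * (π.map (algebraMap K F)).rootMultiplicity z := by
    rw [Polynomial.map_pow, ← Polynomial.count_roots, Polynomial.roots_pow, Multiset.count_nsmul,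
      Polynomial.count_roots]
  have hroot : aeval z (π ^ m) = 0 ↔ m ≠ 0 ∧ 0 < (π.map (algebraMap K F)).rootMultiplicity z := by
    rw [map_pow, pow_eq_zero_iff', Polynomial.rootMultiplicity_pos hmap_ne_zero,
      Polynomial.IsRoot.def, Polynomial.eval_map_algebraMap, and_comm]
  rw [hpow, hroot]
  interval_cases (π.map (algebraMap K F)).rootMultiplicity z <;> omega

theorem forall_card_le_rootMultiplicity_map_pow_iff {K F κ ι : Type*} [Field K] [Field F]
    [Algebra K F] [Finite κ] {π : ι → K[X]} (hπ : ∀ i, (π i).Separable) (m : ι → ℕ) (I : κ → ι)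
    (z : κ → F) :
    (∀ j, Nat.card {l // I l = I j ∧ z l = z j} ≤
        ((π (I j) ^ m (I j)).map (algebraMap K F)).rootMultiplicity (z j)) ↔
      (∀ j, aeval (z j) (π (I j) ^ m (I j)) = 0) ∧
        ∀ j, Nat.card {l // I l = I j ∧ z l = z j} ≤ m (I j) := by
  rw [← forall_and]
  refine forall_congr' fun j ↦ le_rootMultiplicity_map_pow_iff (hπ _) _ _ ?_
  exact Nat.card_pos_iff.mpr ⟨⟨⟨j, rfl, rfl⟩⟩, inferInstance⟩

theorem mul_eq_one_and_forall_card_le_iff {K F ι : Type*} [Field K] [Field F] [Algebra K F]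
    {π : ι → K[X]} (hπ : ∀ i, (π i).Separable) (m : ι → ℕ) {i₁ i₂ i₃ : ι} {z₁ z₂ z₃ : F} :
    (z₁ * z₂ * z₃ = 1 ∧ ∀ j : Fin 3, Nat.card {l : Fin 3 //
        ![i₁, i₂, i₃] l = ![i₁, i₂, i₃] j ∧ ![z₁, z₂, z₃] l = ![z₁, z₂, z₃] j} ≤
      ((π (![i₁, i₂, i₃] j) ^ m (![i₁, i₂, i₃] j)).map (algebraMap K F)).rootMultiplicity
        (![z₁, z₂, z₃] j)) ↔
    aeval z₁ (π i₁ ^ m i₁) = 0 ∧ aeval z₂ (π i₂ ^ m i₂) = 0 ∧ aeval z₃ (π i₃ ^ m i₃) = 0 ∧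
      z₁ * z₂ * z₃ = 1 ∧ ∀ j : Fin 3, Nat.card {l : Fin 3 //
        ![i₁, i₂, i₃] l = ![i₁, i₂, i₃] j ∧ ![z₁, z₂, z₃] l = ![z₁, z₂, z₃] j} ≤
          m (![i₁, i₂, i₃] j) := by
  have roots_iff : (∀ j, aeval (![z₁, z₂, z₃] j)
        (π (![i₁, i₂, i₃] j) ^ m (![i₁, i₂, i₃] j)) = 0) ↔
      aeval z₁ (π i₁ ^ m i₁) = 0 ∧ aeval z₂ (π i₂ ^ m i₂) = 0 ∧ aeval z₃ (π i₃ ^ m i₃) = 0 := by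
    simp [Fin.forall_fin_succ]
  rw [forall_card_le_rootMultiplicity_map_pow_iff hπ, roots_iff]
  tauto

theorem stmt3 (q : ℕ) (hq : 1 ≤ q) (π : Fin q → Polynomial ℚ)
    (hirr : ∀ i, Irreducible (π i)) (h0 : ∀ i, (π i).eval 0 ≠ 0)
    (m : Fin q → ℕ) (hm : ∀ i, 1 ≤ m i)
    (i₁ i₂ i₃ : Fin q) :
    (Submodule.span ℚ { x : Hcal ℚ (DirectSum (Fin q) (fun i => LQuot ℚ
          (Polynomial.toLaurent (π i ^ m i)))) | ∃ k₁ k₂ k₃ : ℤ,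
        x = Submodule.Quotient.mk (wedge3 ℚ _
          ((T k₁ : LaurentPolynomial ℚ) •
            DirectSum.of (fun i => LQuot ℚ (Polynomial.toLaurent (π i ^ m i))) i₁ 1)
          ((T k₂ : LaurentPolynomial ℚ) •
            DirectSum.of (fun i => LQuot ℚ (Polynomial.toLaurent (π i ^ m i))) i₂ 1)
          ((T k₃ : LaurentPolynomial ℚ) •
            DirectSum.of (fun i => LQuot ℚ (Polynomial.toLaurent (π i ^ m i))) i₃ 1)) } ≠ ⊥)
      ↔ ∃ z₁ z₂ z₃ : ℂ,
        Polynomial.aeval z₁ (π i₁ ^ m i₁) = 0 ∧ Polynomial.aeval z₂ (π i₂ ^ m i₂) = 0 ∧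
        Polynomial.aeval z₃ (π i₃ ^ m i₃) = 0 ∧ z₁ * z₂ * z₃ = 1 ∧
        ∀ j : Fin 3, Nat.card {l : Fin 3 //
            ![i₁, i₂, i₃] l = ![i₁, i₂, i₃] j ∧ ![z₁, z₂, z₃] l = ![z₁, z₂, z₃] j} ≤
          m (![i₁, i₂, i₃] j) := by
  have hπ0 (i : Fin q) : π i ^ m i ≠ 0 := pow_ne_zero _ (hirr i).ne_zero
  exact (stmt3_general (δ := fun i ↦ π i ^ m i) (fun _ ↦ IsAlgClosed.splits _) hπ0 i₁ i₂ i₃).trans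
    (exists₃_congr fun _ _ _ ↦ mul_eq_one_and_forall_card_le_iff (fun i ↦ (hirr i).separable) m)
end
end

section
/- Let z be a nonzero complex number and m ≥ 1 an integer, and set A = ℂ[t^{±1}]/((t − z)^m). Then ℋ(A) is nonzero if and only if z³ = 1 and m ≥ 3. -/
open LaurentPolynomial TensorProduct

set_option synthInstance.maxHeartbeats 1000000
set_option maxHeartbeats 1000000
noncomputable section

/-!
Write `t` for multiplication by `T 1`. The holonomy subspace is the range of `1 - Λ³t`, so `ℋ` is
nonzero exactly when `1 - Λ³t` is not surjective. Since `t - z` is nilpotent, so is `Λ³t - z³`: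
expanding `(z + (t - z))^{⊗3}` leaves, besides `z³`, commuting terms each having a nilpotent factor.
Hence `1 - Λ³t` is `1 - z³` up to a nilpotent: it is invertible if `z³ ≠ 1`, while if `z³ = 1` it is
nilpotent and therefore surjective only when `Λ³ = 0`, that is, when the dimension `m` is below `3`.
-/

section ExteriorPower

variable {R M ι : Type*} [CommRing R] [AddCommGroup M] [Module R M]

lemma isNilpotent_piTensorProduct_map {N : ι → Type*} [∀ i, AddCommGroup (N i)]
    [∀ i, Module R (N i)] {g : ∀ i, Module.End R (N i)} {i : ι} (hi : IsNilpotent (g i)) :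
    IsNilpotent (PiTensorProduct.map g) := by
  obtain ⟨k, hk⟩ := hi
  refine ⟨k, ?_⟩
  rw [← PiTensorProduct.map_pow]
  exact (PiTensorProduct.mapMultilinear R N N).map_coord_zero i hk

lemma piTensorProduct_map_sub_pow_smul_one_eq_sum [Fintype ι] [DecidableEq ι]
    (t : Module.End R M) (z : R) :
    PiTensorProduct.map (fun _ : ι ↦ t) - z ^ Fintype.card ι • 1 =
      ∑ s ∈ Finset.univ.erase (Finset.univ : Finset ι),
        PiTensorProduct.map (s.piecewise (fun _ ↦ z • 1) fun _ ↦ t - z • 1) := by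
  have expansion := (PiTensorProduct.mapMultilinear R (fun _ : ι ↦ M) fun _ ↦ M).map_add_univ
    (fun _ ↦ z • 1) (fun _ ↦ t - z • 1)
  have top_term : PiTensorProduct.map (fun _ : ι ↦ z • (1 : Module.End R M)) =
      z ^ Fintype.card ι • 1 := by
    simpa using (PiTensorProduct.mapMultilinear R (fun _ : ι ↦ M) fun _ ↦ M).map_smul_univ
      (fun _ ↦ z) (fun _ ↦ 1)
  rw [← Finset.add_sum_erase _ _ (Finset.mem_univ Finset.univ)] at expansion
  simp only [PiTensorProduct.mapMultilinear_apply, Finset.piecewise_univ, top_term, Pi.add_def,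
    add_sub_cancel] at expansion
  rw [expansion, add_sub_cancel_left]

lemma isNilpotent_piTensorProduct_map_sub_pow_smul_one [Fintype ι] {t : Module.End R M} {z : R}
    (ht : IsNilpotent (t - z • 1)) :
    IsNilpotent (PiTensorProduct.map (fun _ : ι ↦ t) - z ^ Fintype.card ι • 1) := by
  classical
  rw [piTensorProduct_map_sub_pow_smul_one_eq_sum]
  refine Commute.isNilpotent_sum (fun s hs ↦ ?_) fun s s' _ _ ↦ ?_
  · obtain ⟨i, hi⟩ : ∃ i, i ∉ s := by
      simpa [Finset.eq_univ_iff_forall] using Finset.ne_of_mem_erase hs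
    exact isNilpotent_piTensorProduct_map (i := i) (by rwa [Finset.piecewise_eq_of_notMem _ _ _ hi])
  · refine Commute.map (f := PiTensorProduct.mapMonoidHom) (Pi.commute_iff.2 fun i ↦ ?_)
    have scalar_commute (g : Module.End R M) : Commute (z • 1) g :=
      (Commute.one_left g).smul_left z
    by_cases hs : i ∈ s <;> by_cases hs' : i ∈ s' <;>
      simp only [Finset.piecewise, hs, hs', if_true, if_false, scalar_commute,
        (scalar_commute _).symm, Commute.refl]

lemma isNilpotent_exteriorPower_map_sub_pow_smul_one {t : Module.End R M} {z : R}
    (ht : IsNilpotent (t - z • 1)) (n : ℕ) :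
    IsNilpotent (exteriorPower.map n t - z ^ n • 1) := by
  let π : (⨂[R] _ : Fin n, M) →ₗ[R] ⋀[R]^n M :=
    PiTensorProduct.lift (exteriorPower.ιMulti R n).toMultilinearMap
  have range_π : LinearMap.range π = ⊤ := by
    rw [eq_top_iff, ← exteriorPower.ιMulti_span, Submodule.span_le]
    rintro _ ⟨v, rfl⟩
    exact ⟨PiTensorProduct.tprod R v, PiTensorProduct.lift.tprod v⟩
  have π_intertwines : (exteriorPower.map n t - z ^ n • 1) ∘ₗ π =
      π ∘ₗ (PiTensorProduct.map (fun _ ↦ t) - z ^ n • 1) := by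
    ext v
    simp [π, Function.comp_def]
  obtain ⟨k, hk⟩ := isNilpotent_piTensorProduct_map_sub_pow_smul_one (ι := Fin n) ht
  rw [Fintype.card_fin] at hk
  refine ⟨k, ?_⟩
  rw [← LinearMap.cancel_right (LinearMap.range_eq_top.1 range_π),
    Module.End.commute_pow_left_of_commute π_intertwines, hk, LinearMap.comp_zero,
    LinearMap.zero_comp]

lemma nontrivial_exteriorPower_iff {K V : Type*} [Field K] [AddCommGroup V] [Module K V]
    [FiniteDimensional K V] (n : ℕ) :
    Nontrivial (⋀[K]^n V) ↔ n ≤ Module.finrank K V := by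
  rw [← Module.finrank_pos_iff (R := K), exteriorPower.finrank_eq, Nat.pos_iff_ne_zero, Ne,
    Nat.choose_eq_zero_iff, not_lt]

end ExteriorPower

section ScalarPlusNilpotent

variable {K V : Type*} [Field K] [AddCommGroup V] [Module K V]

lemma isUnit_one_sub_of_isNilpotent_sub_smul_one {f : Module.End K V} {c : K} (hc : c ≠ 1)
    (hf : IsNilpotent (f - c • 1)) : IsUnit (1 - f) := by
  have isUnit_scalar : IsUnit ((1 - c) • (1 : Module.End K V)) :=
    isUnit_one.smul (Units.mk0 (1 - c) (sub_ne_zero.2 hc.symm))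
  have decomposition : 1 - f = (1 - c) • 1 + -(f - c • 1) := by module
  rw [decomposition]
  exact hf.neg.isUnit_add_left_of_commute isUnit_scalar ((Commute.one_right _).smul_right _)

lemma subsingleton_of_isNilpotent_of_surjective {R M : Type*} [Semiring R] [AddCommMonoid M]
    [Module R M] {f : Module.End R M} (hf : IsNilpotent f) (hsurj : Function.Surjective f) :
    Subsingleton M := by
  obtain ⟨k, hk⟩ := hf
  have zero_surjective : Function.Surjective (0 : Module.End R M) := by
    rw [← hk, Module.End.coe_pow]
    exact hsurj.iterate k
  refine subsingleton_of_forall_eq 0 fun x ↦ ?_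
  obtain ⟨y, rfl⟩ := zero_surjective x
  rfl

lemma surjective_one_sub_iff_of_isNilpotent_sub_smul_one {f : Module.End K V} {c : K}
    (hf : IsNilpotent (f - c • 1)) :
    Function.Surjective (1 - f : Module.End K V) ↔ (c = 1 → Subsingleton V) := by
  constructor
  · rintro hsurj rfl
    refine subsingleton_of_isNilpotent_of_surjective ?_ hsurj
    simpa only [one_smul, neg_sub] using hf.neg
  · intro h
    by_cases hc : c = 1
    · have := h hc
      exact Function.surjective_to_subsingleton _
    · exact ((Module.End.isUnit_iff _).1
        (isUnit_one_sub_of_isNilpotent_sub_smul_one hc hf)).surjective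

end ScalarPlusNilpotent

section LaurentQuotient

open Polynomial

lemma isUnit_quotient_mk_of_isCoprime {R : Type*} [CommRing R] {a b : R} (h : IsCoprime a b) :
    IsUnit (Ideal.Quotient.mk (Ideal.span {b}) a) := by
  have := h.map (Ideal.Quotient.mk (Ideal.span {b}))
  rwa [Ideal.Quotient.mk_singleton_self, isCoprime_zero_right] at this

lemma toLaurent_dvd_toLaurent_iff {R : Type*} [CommRing R] {f p : R[X]} (hf : IsCoprime X f) :
    toLaurent f ∣ toLaurent p ↔ f ∣ p := by
  refine ⟨fun ⟨g, hg⟩ ↦ ?_, map_dvd toLaurent⟩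
  obtain ⟨n, q, hq⟩ := g.exists_T_pow
  refine (hf.symm.pow_right (n := n)).dvd_of_dvd_mul_right ⟨q, toLaurent_injective ?_⟩
  rw [map_mul, map_mul, toLaurent_X_pow, hg, hq, mul_assoc]

variable {K : Type} [Field K] {f : K[X]}

/-- The map `K[X]/(f) → K[t^{±1}]/(f)` induced by the inclusion of polynomials into Laurent
polynomials; it is used to compute the dimension of its target. -/
def quotientToLQuot (f : K[X]) : (K[X] ⧸ Ideal.span {f}) →ₐ[K] LQuot K (toLaurent f) :=
  Ideal.quotientMapₐ _ toLaurentAlg <|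
    (Ideal.span_singleton_le_iff_mem _).2 (Ideal.mem_span_singleton_self (toLaurent f))

lemma quotientToLQuot_mk (p : K[X]) :
    quotientToLQuot f (Ideal.Quotient.mk _ p) = Ideal.Quotient.mk _ (toLaurent p) :=
  rfl

lemma quotientToLQuot_injective (hf : IsCoprime X f) :
    Function.Injective (quotientToLQuot f) := by
  refine (injective_iff_map_eq_zero _).2 fun x hx ↦ ?_
  obtain ⟨p, rfl⟩ := Ideal.Quotient.mk_surjective x
  rwa [quotientToLQuot_mk, Ideal.Quotient.eq_zero_iff_dvd, toLaurent_dvd_toLaurent_iff hf,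
    ← Ideal.Quotient.eq_zero_iff_dvd] at hx

lemma quotientToLQuot_surjective (hf : IsCoprime X f) :
    Function.Surjective (quotientToLQuot f) := by
  intro y
  obtain ⟨g, rfl⟩ := Ideal.Quotient.mk_surjective y
  obtain ⟨n, q, hq⟩ := g.exists_T_pow
  obtain ⟨u, hu⟩ := (isUnit_quotient_mk_of_isCoprime (hf.pow_left (m := n))).exists_right_inv
  refine ⟨Ideal.Quotient.mk _ q * u, ?_⟩
  calc quotientToLQuot f (Ideal.Quotient.mk _ q * u)
      = Ideal.Quotient.mk _ g * quotientToLQuot f (Ideal.Quotient.mk _ (X ^ n) * u) := by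
        rw [map_mul, map_mul, quotientToLQuot_mk, quotientToLQuot_mk, hq, toLaurent_X_pow,
          map_mul, mul_assoc]
    _ = Ideal.Quotient.mk _ g := by rw [hu, map_one, mul_one]

/-- `K[X]/(f) ≃ K[t^{±1}]/(f)` when `f` is coprime to `X`, because then `X` is already invertible
modulo `f`. -/
def quotientEquivLQuot (hf : IsCoprime X f) :
    (K[X] ⧸ Ideal.span {f}) ≃ₐ[K] LQuot K (toLaurent f) :=
  AlgEquiv.ofBijective (quotientToLQuot f)
    ⟨quotientToLQuot_injective hf, quotientToLQuot_surjective hf⟩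

lemma finrank_LQuot_toLaurent (hf : IsCoprime X f) :
    Module.finrank K (LQuot K (toLaurent f)) = f.natDegree := by
  rw [← (quotientEquivLQuot hf).toLinearEquiv.finrank_eq, finrank_quotient_span_eq_natDegree]

lemma finiteDimensional_LQuot_toLaurent (hf : IsCoprime X f) (hf₀ : f ≠ 0) :
    FiniteDimensional K (LQuot K (toLaurent f)) :=
  have : FiniteDimensional K (K[X] ⧸ Ideal.span {f}) :=
    (AdjoinRoot.powerBasis hf₀).finite
  .of_surjective _ (quotientEquivLQuot hf).toLinearEquiv.surjective

lemma toLaurent_X_sub_C_pow {R : Type*} [Ring R] (z : R) (m : ℕ) :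
    toLaurent ((X - Polynomial.C z) ^ m) = (T 1 - LaurentPolynomial.C z) ^ m := by
  simp

lemma isCoprime_X_X_sub_C_pow {R : Type*} [CommRing R] {z : R} (hz : IsUnit z) (m : ℕ) :
    IsCoprime X ((X - Polynomial.C z) ^ m) := by
  refine IsCoprime.pow_right ?_
  simpa using isCoprime_X_sub_C_of_isUnit_sub (a := 0) (b := z) (by simpa using hz.neg)

lemma nontrivial_exteriorPower_LQuot_iff {z : K} (hz : z ≠ 0) (m n : ℕ) :
    Nontrivial (⋀[K]^n (LQuot K ((T 1 - LaurentPolynomial.C z) ^ m))) ↔ n ≤ m := by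
  have hcoprime := isCoprime_X_X_sub_C_pow hz.isUnit m
  have := finiteDimensional_LQuot_toLaurent hcoprime (pow_ne_zero m (X_sub_C_ne_zero z))
  rw [← toLaurent_X_sub_C_pow, nontrivial_exteriorPower_iff, finrank_LQuot_toLaurent hcoprime,
    natDegree_pow, natDegree_X_sub_C, mul_one]

end LaurentQuotient

section Holonomy

variable {K M : Type} [Field K] [AddCommGroup M] [Module K[T;T⁻¹] M] [Module K M]
  [IsScalarTower K K[T;T⁻¹] M]

lemma wedge3_eq_ιMulti {V : Type} [AddCommGroup V] [Module K V] (v : Fin 3 → V) :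
    wedge3 K V (v 0) (v 1) (v 2) = exteriorPower.ιMulti K 3 v :=
  congrArg (exteriorPower.ιMulti K 3) (FinVec.etaExpand_eq v)

lemma wedgeHol_eq_range :
    wedgeHol K M =
      LinearMap.range (1 - exteriorPower.map 3 (Algebra.lsmul K K M (T 1 : K[T;T⁻¹]))) := by
  rw [← Submodule.map_top, ← exteriorPower.ιMulti_span, Submodule.map_span, ← Set.range_comp,
    wedgeHol]
  have generator (v : Fin 3 → M) :
      (1 - exteriorPower.map 3 (Algebra.lsmul K K M (T 1 : K[T;T⁻¹])))
          (exteriorPower.ιMulti K 3 v) =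
        wedge3 K M (v 0) (v 1) (v 2) -
          wedge3 K M ((T 1 : K[T;T⁻¹]) • v 0) ((T 1 : K[T;T⁻¹]) • v 1)
            ((T 1 : K[T;T⁻¹]) • v 2) := by
    rw [LinearMap.sub_apply, Module.End.one_apply, exteriorPower.map_apply_ιMulti,
      ← wedge3_eq_ιMulti, ← wedge3_eq_ιMulti]
    rfl
  congr 1
  ext x
  constructor
  · rintro ⟨a, b, c, rfl⟩
    exact ⟨![a, b, c], generator _⟩
  · rintro ⟨v, rfl⟩
    exact ⟨v 0, v 1, v 2, generator v⟩

lemma nontrivial_Hcal_iff {z : K}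
    (hz : IsNilpotent (Algebra.lsmul K K M (T 1 - C z : K[T;T⁻¹]))) :
    Nontrivial (Hcal K M) ↔ z ^ 3 = 1 ∧ Nontrivial (⋀[K]^3 M) := by
  have shift_sub_scalar : Algebra.lsmul K K M (T 1 - C z : K[T;T⁻¹]) =
      Algebra.lsmul K K M (T 1 : K[T;T⁻¹]) - z • 1 := by
    rw [map_sub, C_eq_algebraMap, AlgHom.commutes, Algebra.algebraMap_eq_smul_one]
  rw [shift_sub_scalar] at hz
  rw [Submodule.Quotient.nontrivial_iff, wedgeHol_eq_range, Ne, LinearMap.range_eq_top,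
    surjective_one_sub_iff_of_isNilpotent_sub_smul_one
      (isNilpotent_exteriorPower_map_sub_pow_smul_one hz 3), Classical.not_imp,
    not_subsingleton_iff_nontrivial]

lemma isNilpotent_lsmul_LQuot_pow (p : K[T;T⁻¹]) (m : ℕ) :
    IsNilpotent (Algebra.lsmul K K (LQuot K (p ^ m)) p) := by
  refine ⟨m, LinearMap.ext fun x ↦ ?_⟩
  obtain ⟨x, rfl⟩ := Ideal.Quotient.mk_surjective x
  rw [← map_pow]
  exact (Ideal.Quotient.eq_zero_iff_dvd _ _).2 (dvd_mul_right (p ^ m) x)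

end Holonomy

theorem stmt4_general {K : Type} [Field K] (z : K) (m : ℕ) :
    Nontrivial (Hcal K (LQuot K ((T 1 - C z) ^ m))) ↔ z ^ 3 = 1 ∧ 3 ≤ m := by
  rw [nontrivial_Hcal_iff (isNilpotent_lsmul_LQuot_pow (T 1 - C z) m)]
  refine and_congr_right fun hz ↦ nontrivial_exteriorPower_LQuot_iff ?_ m 3
  rintro rfl
  norm_num at hz

theorem stmt4 (z : ℂ) (hz : z ≠ 0) (m : ℕ) (hm : 1 ≤ m) :
    Nontrivial (Hcal ℂ (LQuot ℂ ((T 1 - C z) ^ m))) ↔ z ^ 3 = 1 ∧ 3 ≤ m :=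
  stmt4_general z m
end
end

section
/- Let z, w be nonzero complex numbers with z²w = 1 and let m ≥ n ≥ 1 be integers. Set A = ℂ[t^{±1}]/((t − z)^m) and B = ℂ[t^{±1}]/((t − w)^n), and let W be the quotient of (Λ²_ℂ A) ⊗_ℂ B by the ℂ-subspace spanned by all elements (α∧α')⊗β − (tα∧tα')⊗tβ with α, α' ∈ A and β ∈ B. Then the complex dimension of W is at most n(m − 1). -/
open LaurentPolynomial TensorProduct

set_option synthInstance.maxHeartbeats 1000000
set_option maxHeartbeats 1000000
noncomputable section

/-- The wedge `a ∧ b` as an element of the second exterior power. -/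
def wedge2 (K : Type) [Field K] (M : Type) [AddCommGroup M] [Module K M] (a b : M) :
    ⋀[K]^2 M :=
  ⟨ExteriorAlgebra.ιMulti K 2 ![a, b],
    ExteriorAlgebra.ιMulti_range K 2 (Set.mem_range_self _)⟩

/-- The subspace of `(Λ² A) ⊗ B` spanned by the elements
`(α ∧ α') ⊗ β - (tα ∧ tα') ⊗ tβ`. -/
def w2Hol (K : Type) [Field K] (A B : Type) [AddCommGroup A] [AddCommGroup B]
    [Module (LaurentPolynomial K) A] [Module (LaurentPolynomial K) B]
    [Module K A] [Module K B]
    [IsScalarTower K (LaurentPolynomial K) A] [IsScalarTower K (LaurentPolynomial K) B] :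
    Submodule K (↥(⋀[K]^2 A) ⊗[K] B) :=
  Submodule.span K { x | ∃ (a a' : A) (b : B),
    x = (wedge2 K A a a') ⊗ₜ[K] b -
      (wedge2 K A ((T 1 : LaurentPolynomial K) • a) ((T 1 : LaurentPolynomial K) • a')) ⊗ₜ[K]
        ((T 1 : LaurentPolynomial K) • b) }

/-- The quotient `W` of `(Λ² A) ⊗ B` by the span of the elements
`(α ∧ α') ⊗ β - (tα ∧ tα') ⊗ tβ`. -/
abbrev w2Quot (K : Type) [Field K] (A B : Type) [AddCommGroup A] [AddCommGroup B]
    [Module (LaurentPolynomial K) A] [Module (LaurentPolynomial K) B]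
    [Module K A] [Module K B]
    [IsScalarTower K (LaurentPolynomial K) A] [IsScalarTower K (LaurentPolynomial K) B] :
    Type :=
  @HasQuotient.Quotient _ _ (Submodule.hasQuotient (R := K) (M := ↥(⋀[K]^2 A) ⊗[K] B))
    (w2Hol K A B)

/-!
In `W` the relation reads `[tⁱα ∧ α' ⊗ β] = [α ∧ t⁻ⁱα' ⊗ t⁻ⁱβ]` for every integer `i`. Hence, if `g`
generates `A` over the Laurent polynomials, every class is a combination of classes
`[g ∧ α' ⊗ β]`, which depend only on `α'` modulo `K g` because `g ∧ g = 0`. So `W` is a quotient of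
`(A / K g) ⊗ B`. For `A = K[t^{±1}] / (p)` and `B = K[t^{±1}] / (q)` this space has dimension at
most `(deg p - 1) * deg q`: the Artinian ring `K[t] / (p)` maps onto its localization
`K[t^{±1}] / (p)`.
-/

theorem rank_quotient_span_singleton_le {K V : Type*} [DivisionRing K] [AddCommGroup V]
    [Module K V] {v : V} (hv : v ≠ 0) {d : ℕ} (hd : Module.rank K V ≤ d) :
    Module.rank K (V ⧸ K ∙ v) ≤ (d - 1 : ℕ) := by
  have : Module.Finite K V :=
    Module.rank_lt_aleph0_iff.1 (hd.trans_lt Cardinal.natCast_lt_aleph0)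
  have hsum := Submodule.finrank_quotient_add_finrank (K ∙ v)
  rw [finrank_span_singleton hv] at hsum
  rw [← Module.finrank_eq_rank, Nat.cast_le] at hd ⊢
  omega

section QuotientToLaurent

open Polynomial

/-- The map `K[X] / (p) → K[T;T⁻¹] / (p)` induced by the inclusion `K[X] → K[T;T⁻¹]`. -/
def quotientToLaurent {K : Type*} [Field K] (p : K[X]) :
    K[X] ⧸ Ideal.span {p} →ₐ[K] K[T;T⁻¹] ⧸ Ideal.span {toLaurent p} :=
  Ideal.quotientMapₐ _ toLaurentAlg
    ((Ideal.span_singleton_le_iff_mem _).2 (Ideal.mem_span_singleton_self (toLaurent p)))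

theorem quotientToLaurent_surjective {K : Type*} [Field K] {p : K[X]} (hp : p ≠ 0) :
    Function.Surjective (quotientToLaurent p) := by
  algebraize [(quotientToLaurent p).toRingHom]
  have : Module.Finite K (K[X] ⧸ Ideal.span {p}) := (AdjoinRoot.powerBasis hp).finite
  have : IsArtinianRing (K[X] ⧸ Ideal.span {p}) := IsArtinianRing.of_finite K _
  have : IsLocalization ((Submonoid.powers (X : K[X])).map (Ideal.Quotient.mk (Ideal.span {p})))
      (K[T;T⁻¹] ⧸ Ideal.span {toLaurent p}) := by
    refine IsLocalization.of_surjective _ K[T;T⁻¹] _ Ideal.Quotient.mk_surjective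
      (Ideal.Quotient.mk _) Ideal.Quotient.mk_surjective ?_ ?_
    · rfl
    · rw [Ideal.mk_ker, Ideal.mk_ker, Ideal.map_span, Set.image_singleton]
      rfl
  exact IsArtinianRing.localization_surjective
    ((Submonoid.powers (X : K[X])).map (Ideal.Quotient.mk (Ideal.span {p}))) _

theorem rank_LQuot_toLaurent_le {K : Type} [Field K] {p : K[X]} (hp : p ≠ 0) :
    Module.rank K (LQuot K (toLaurent p)) ≤ p.natDegree := by
  have : Module.Finite K (K[X] ⧸ Ideal.span {p}) := (AdjoinRoot.powerBasis hp).finite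
  rw [← finrank_quotient_span_eq_natDegree, Module.finrank_eq_rank]
  exact (quotientToLaurent p).toLinearMap.rank_le_of_surjective (quotientToLaurent_surjective hp)

theorem rank_LQuot_quotient_span_one_le {K : Type} [Field K] {p : K[X]} (hp : p ≠ 0) :
    Module.rank K (LQuot K (toLaurent p) ⧸ K ∙ (1 : LQuot K (toLaurent p))) ≤
      (p.natDegree - 1 : ℕ) := by
  rcases subsingleton_or_nontrivial (LQuot K (toLaurent p)) with _ | _
  · rw [rank_subsingleton']
    exact zero_le
  · exact rank_quotient_span_singleton_le one_ne_zero (rank_LQuot_toLaurent_le hp)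

end QuotientToLaurent

theorem LQuot.span_singleton_one_eq_top {K : Type} [Field K] (p : K[T;T⁻¹]) :
    Submodule.span K[T;T⁻¹] {(1 : LQuot K p)} = ⊤ := by
  refine (Submodule.span_singleton_eq_top_iff _ _).2 fun x => ?_
  obtain ⟨r, rfl⟩ := Ideal.Quotient.mk_surjective x
  exact ⟨r, (Algebra.algebraMap_eq_smul_one r).symm⟩

theorem span_range_T_smul_eq_top {K M : Type*} [CommSemiring K] [AddCommMonoid M]
    [Module K[T;T⁻¹] M] [Module K M] [IsScalarTower K K[T;T⁻¹] M] {g : M}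
    (hg : Submodule.span K[T;T⁻¹] {g} = ⊤) :
    Submodule.span K (Set.range fun i : ℤ => (T i : K[T;T⁻¹]) • g) = ⊤ := by
  have hT : Submodule.span K (Set.range (T : ℤ → K[T;T⁻¹])) = ⊤ := by
    refine eq_top_iff.2 fun p _ => ?_
    induction p using LaurentPolynomial.induction_on' with
    | add p q hp hq => exact add_mem (hp trivial) (hq trivial)
    | C_mul_T i a =>
      rw [← smul_eq_C_mul]
      exact Submodule.smul_mem _ a (Submodule.subset_span ⟨i, rfl⟩)
  have hsmul := Submodule.span_smul_of_span_eq_top hT {g}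
  rwa [Set.smul_singleton, ← Set.range_comp, hg, Submodule.restrictScalars_top] at hsmul

section Wedge

variable (K : Type) [Field K] {M : Type} [AddCommGroup M] [Module K M]

theorem wedge2_self (a : M) : wedge2 K M a a = 0 :=
  (exteriorPower.ιMulti K 2).map_eq_zero_of_eq ![a, a] (i := 0) (j := 1) rfl (by decide)

variable (M)

/-- The exterior product `(a, b) ↦ a ∧ b` as a bilinear map. -/
def wedge2Bilin : M →ₗ[K] M →ₗ[K] ⋀[K]^2 M :=
  LinearMap.mk₂ K (wedge2 K M)
    (fun a b c => (exteriorPower.ιMulti K 2).map_vecCons_add ![c] a b)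
    (fun r a c => (exteriorPower.ιMulti K 2).map_vecCons_smul ![c] r a)
    (fun c a b => ((exteriorPower.ιMulti K 2).curryLeft c).map_vecCons_add ![] a b)
    (fun r c a => ((exteriorPower.ιMulti K 2).curryLeft c).map_vecCons_smul ![] r a)

theorem span_range_wedge2 :
    Submodule.span K (Set.range fun x : M × M => wedge2 K M x.1 x.2) = ⊤ := by
  have hcomp : (fun x : M × M => wedge2 K M x.1 x.2) =
      exteriorPower.ιMulti K 2 ∘ (finTwoArrowEquiv M).symm := rfl
  rw [hcomp, EquivLike.range_comp, exteriorPower.ιMulti_span]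

end Wedge

section Quotient

variable (K A B : Type) [Field K] [AddCommGroup A] [AddCommGroup B]
  [Module K[T;T⁻¹] A] [Module K[T;T⁻¹] B] [Module K A] [Module K B]
  [IsScalarTower K K[T;T⁻¹] A] [IsScalarTower K K[T;T⁻¹] B]

/-- The quotient map `(Λ² A) ⊗ B → W`. The instance arguments are left to unification with those
in `w2Quot`: comparing them with freshly synthesized ones is prohibitively slow. -/
def w2Mk : ⋀[K]^2 A ⊗[K] B →ₗ[K] w2Quot K A B :=
  @Submodule.mkQ _ _ _ _ _ _

theorem w2Mk_surjective : Function.Surjective (w2Mk K A B) :=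
  @Submodule.mkQ_surjective _ _ _ _ _ _

theorem w2Mk_eq_of_sub_mem {x y : ⋀[K]^2 A ⊗[K] B} (h : x - y ∈ w2Hol K A B) :
    w2Mk K A B x = w2Mk K A B y :=
  (@Submodule.Quotient.eq _ _ _ _ _ _ _ _).2 h

/-- The class `[(a ∧ a') ⊗ b]` in `W`, as a trilinear map of `a`, `a'` and `b`. -/
def w2Class : A →ₗ[K] A →ₗ[K] B →ₗ[K] w2Quot K A B :=
  (wedge2Bilin K A).compr₂ ((TensorProduct.mk K (⋀[K]^2 A) B).compr₂ (w2Mk K A B))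

variable {A B}

theorem w2Class_apply (a a' : A) (b : B) :
    w2Class K A B a a' b = w2Mk K A B (wedge2 K A a a' ⊗ₜ[K] b) :=
  rfl

theorem w2Class_self (a : A) : w2Class K A B a a = 0 := by
  ext b
  rw [w2Class_apply, wedge2_self, zero_tmul, map_zero, LinearMap.zero_apply]

theorem eq_top_of_forall_w2Class_mem {S : Submodule K (w2Quot K A B)}
    (hS : ∀ a a' b, w2Class K A B a a' b ∈ S) : S = ⊤ := by
  have hcomap : S.comap (w2Mk K A B) = ⊤ := by
    rw [eq_top_iff, ← TensorProduct.map₂_mk_top_top_eq_top, ← span_range_wedge2,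
      ← Submodule.span_univ (R := K) (M := B), Submodule.map₂_span_span, Submodule.span_le]
    rintro _ ⟨_, ⟨⟨a, a'⟩, rfl⟩, b, -, rfl⟩
    exact hS a a' b
  rw [← Submodule.map_comap_eq_of_surjective (w2Mk_surjective K A B) S, hcomap,
    Submodule.map_top, LinearMap.range_eq_top.2 (w2Mk_surjective K A B)]

theorem w2Class_T_one_smul (a a' : A) (b : B) :
    w2Class K A B ((T 1 : K[T;T⁻¹]) • a) ((T 1 : K[T;T⁻¹]) • a') ((T 1 : K[T;T⁻¹]) • b) =
      w2Class K A B a a' b :=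
  (w2Mk_eq_of_sub_mem K A B (Submodule.subset_span ⟨a, a', b, rfl⟩)).symm

theorem w2Class_T_smul (i : ℤ) (a a' : A) (b : B) :
    w2Class K A B ((T i : K[T;T⁻¹]) • a) ((T i : K[T;T⁻¹]) • a') ((T i : K[T;T⁻¹]) • b) =
      w2Class K A B a a' b := by
  induction i using Int.induction_on with
  | zero => simp only [T_zero, one_smul]
  | succ i ih =>
    rw [← ih, ← w2Class_T_one_smul K ((T i : K[T;T⁻¹]) • a)]
    simp only [smul_smul, ← T_add, add_comm]
  | pred i ih =>
    rw [← ih, ← w2Class_T_one_smul]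
    simp only [smul_smul, ← T_add, add_sub_cancel]

theorem w2Class_T_smul_left (i : ℤ) (a a' : A) (b : B) :
    w2Class K A B ((T i : K[T;T⁻¹]) • a) a' b =
      w2Class K A B a ((T (-i) : K[T;T⁻¹]) • a') ((T (-i) : K[T;T⁻¹]) • b) := by
  rw [← w2Class_T_smul K i a]
  simp only [smul_smul, ← T_add, add_neg_cancel, T_zero, one_smul]

variable (B) in
/-- The map `(A / K g) ⊗ B → W` sending `[a] ⊗ b` to `[(g ∧ a) ⊗ b]`. -/
def w2ClassLift (g : A) : (A ⧸ K ∙ g) ⊗[K] B →ₗ[K] w2Quot K A B :=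
  TensorProduct.lift ((K ∙ g).liftQ (w2Class K A B g)
    ((Submodule.span_singleton_le_iff_mem _ _).2 (w2Class_self K g)))

theorem w2ClassLift_mk_tmul (g a : A) (b : B) :
    w2ClassLift K B g (Submodule.Quotient.mk a ⊗ₜ[K] b) = w2Class K A B g a b :=
  rfl

theorem w2ClassLift_surjective {g : A} (hg : Submodule.span K[T;T⁻¹] {g} = ⊤) :
    Function.Surjective (w2ClassLift K B g) := by
  refine LinearMap.range_eq_top.1 (eq_top_of_forall_w2Class_mem K fun a a' b => ?_)
  have ha : a ∈ Submodule.span K (Set.range fun i : ℤ => (T i : K[T;T⁻¹]) • g) :=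
    span_range_T_smul_eq_top hg ▸ Submodule.mem_top
  induction ha using Submodule.span_induction with
  | mem x hx =>
    obtain ⟨i, rfl⟩ := hx
    rw [w2Class_T_smul_left, ← w2ClassLift_mk_tmul]
    exact LinearMap.mem_range_self _ _
  | zero => simp only [map_zero, LinearMap.zero_apply, zero_mem]
  | add x y _ _ hx hy => simpa only [map_add, LinearMap.add_apply] using add_mem hx hy
  | smul r x _ hx =>
    simpa only [map_smul, LinearMap.smul_apply] using Submodule.smul_mem _ r hx

theorem rank_w2Quot_le {g : A} (hg : Submodule.span K[T;T⁻¹] {g} = ⊤) :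
    Module.rank K (w2Quot K A B) ≤ Module.rank K (A ⧸ K ∙ g) * Module.rank K B :=
  (LinearMap.rank_le_of_surjective _ (w2ClassLift_surjective K hg)).trans_eq rank_tensorProduct'

end Quotient

theorem toLaurent_X_sub_C_pow_s7 {R : Type*} [Ring R] (r : R) (k : ℕ) :
    Polynomial.toLaurent ((Polynomial.X - Polynomial.C r) ^ k) = (T 1 - C r) ^ k := by
  rw [map_pow, map_sub, Polynomial.toLaurent_X, Polynomial.toLaurent_C]

open Polynomial in
theorem stmt7_general {K : Type} [Field K] {p q : K[X]} (hp : 0 < p.natDegree) (hq : q ≠ 0) :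
    Module.rank K (w2Quot K (LQuot K (toLaurent p)) (LQuot K (toLaurent q))) ≤
      (q.natDegree * (p.natDegree - 1) : ℕ) := by
  have hp0 : p ≠ 0 := ne_zero_of_natDegree_gt hp
  calc Module.rank K (w2Quot K (LQuot K (toLaurent p)) (LQuot K (toLaurent q)))
    _ ≤ Module.rank K (LQuot K (toLaurent p) ⧸ K ∙ (1 : LQuot K (toLaurent p))) *
          Module.rank K (LQuot K (toLaurent q)) :=
        rank_w2Quot_le K (LQuot.span_singleton_one_eq_top _)
    _ ≤ (p.natDegree - 1 : ℕ) * q.natDegree :=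
        mul_le_mul' (rank_LQuot_quotient_span_one_le hp0) (rank_LQuot_toLaurent_le hq)
    _ = (q.natDegree * (p.natDegree - 1) : ℕ) := by rw [mul_comm, Nat.cast_mul]

theorem stmt7 (z w : ℂ) (hz : z ≠ 0) (hw : w ≠ 0) (hzw : z ^ 2 * w = 1)
    (m n : ℕ) (hn : 1 ≤ n) (hnm : n ≤ m) :
    Module.rank ℂ (w2Quot ℂ (LQuot ℂ ((T 1 - C z) ^ m)) (LQuot ℂ ((T 1 - C w) ^ n))) ≤
      (n * (m - 1) : ℕ) := by
  have hdeg (x : ℂ) (k : ℕ) : ((Polynomial.X - Polynomial.C x) ^ k).natDegree = k := by simp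
  have hbound := stmt7_general (hdeg z m ▸ hn.trans hnm)
    (Polynomial.ne_zero_of_natDegree_gt (hdeg w n ▸ hn : 0 < _))
  rwa [hdeg, hdeg, toLaurent_X_sub_C_pow_s7, toLaurent_X_sub_C_pow_s7] at hbound
end
end
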